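/- arXiv:1408.5659 — 2 statements merged into one kernel-verified Lean document; each statement's English description precedes it below -/
import Mathlib

section
/- Let 1 ≤ q ≤ ∞, k ∈ ℕ, α, β ≥ 0, n ≥ 2k, 0 ≤ ξ ≤ 1 − 2k²n^{−2}, and let f(x) := (x − ξ)_+^{k−1} (with the convention that for k = 1, f is the indicator function of [ξ, 1] scaled as (x−ξ)_+^0). Then there is a constant c > 0, independent of n and ξ (depending only on k, q, α, β), such that E_n(f)_{w_{α,β}, q} ≥ c·n^{−k+1−1/q}·(1−ξ)^{β + (k−1)/2 + 1/(2q)}. -/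
open MeasureTheory Set Filter
open scoped ENNReal

noncomputable section

/-- The Jacobi weight `w_{α,β}(x) = (1+x)^α (1-x)^β`. -/
def jacobi (α β : ℝ) (x : ℝ) : ℝ := (1 + x) ^ α * (1 - x) ^ β

/-- `φ(x) = √(1-x²)`. -/
def phiW (x : ℝ) : ℝ := Real.sqrt (1 - x ^ 2)

/-- The `L^p` norm of `g` on the interval `[a,b]` (essential sup when `p = ∞`). -/
def LpOn (g : ℝ → ℝ) (p : ℝ≥0∞) (a b : ℝ) : ℝ≥0∞ :=
  eLpNorm g p (volume.restrict (Icc a b))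

/-- The `k`-th symmetric difference `Δ_h^k(f,x)` relative to `[-1,1]`. -/
def symmDelta (k : ℕ) (h : ℝ) (f : ℝ → ℝ) (x : ℝ) : ℝ :=
  if (x - k * h / 2 ∈ Icc (-1 : ℝ) 1 ∧ x + k * h / 2 ∈ Icc (-1 : ℝ) 1) then
    ∑ i ∈ Finset.range (k + 1), ((k.choose i : ℝ) * (-1 : ℝ) ^ (k - i) * f (x - k * h / 2 + i * h))
  else 0

/-- Main-part weighted modulus `Ω_φ^k(f,δ)_{w,p}`. -/
def OmegaMain (k : ℕ) (f : ℝ → ℝ) (δ : ℝ) (wt : ℝ → ℝ) (p : ℝ≥0∞) : ℝ≥0∞ :=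
  ⨆ h ∈ Ioc (0 : ℝ) δ,
    LpOn (fun x => wt x * symmDelta k (h * phiW x) f x) p
      (-1 + 2 * (k : ℝ) ^ 2 * h ^ 2) (1 - 2 * (k : ℝ) ^ 2 * h ^ 2)

/-- Forward part `Ω→_φ^k(f,δ)_{w,p}`. -/
def OmegaFwd (k : ℕ) (f : ℝ → ℝ) (δ : ℝ) (wt : ℝ → ℝ) (p : ℝ≥0∞) : ℝ≥0∞ :=
  ⨆ h ∈ Ioc (0 : ℝ) (2 * (k : ℝ) ^ 2 * δ ^ 2),
    LpOn (fun x => wt x * symmDelta k h f (x + k * h / 2)) p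
      (-1) (-1 + 2 * (k : ℝ) ^ 2 * δ ^ 2)

/-- Backward part `Ω←_φ^k(f,δ)_{w,p}`. -/
def OmegaBwd (k : ℕ) (f : ℝ → ℝ) (δ : ℝ) (wt : ℝ → ℝ) (p : ℝ≥0∞) : ℝ≥0∞ :=
  ⨆ h ∈ Ioc (0 : ℝ) (2 * (k : ℝ) ^ 2 * δ ^ 2),
    LpOn (fun x => wt x * symmDelta k h f (x - k * h / 2)) p
      (1 - 2 * (k : ℝ) ^ 2 * δ ^ 2) 1

/-- Weighted Ditzian–Totik modulus `ω_φ^k(f,δ)_{w,p}`. -/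
def omegaDT (k : ℕ) (f : ℝ → ℝ) (δ : ℝ) (wt : ℝ → ℝ) (p : ℝ≥0∞) : ℝ≥0∞ :=
  OmegaMain k f δ wt p + OmegaFwd k f δ wt p + OmegaBwd k f δ wt p

/-- `f` is `k`-monotone on `(-1,1)`: all `k`-th divided differences over `k+1` distinct
points of `(-1,1)` are nonnegative. -/
def kMonotoneOn (k : ℕ) (f : ℝ → ℝ) : Prop :=
  ∀ x : Fin (k + 1) → ℝ, Function.Injective x → (∀ i, x i ∈ Ioo (-1 : ℝ) 1) →
    0 ≤ ∑ i, f (x i) / ∏ j ∈ Finset.univ.erase i, (x i - x j)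

/-- `M^k`, the class of `k`-monotone functions on `(-1,1)`. -/
def MSet (k : ℕ) : Set (ℝ → ℝ) := {f | kMonotoneOn k f}

/-- `M_+^k`, the `k`-monotone functions on `(-1,1)` vanishing on `(-1,0]`. -/
def MPlus (k : ℕ) : Set (ℝ → ℝ) :=
  {f | kMonotoneOn k f ∧ ∀ x : ℝ, -1 < x → x ≤ 0 → f x = 0}

/-- `J_p = (-1/p, ∞)` for finite `p`, `[0,∞)` for `p = ∞`. -/
def Jset (p : ℝ≥0∞) : Set ℝ := if p = ∞ then Ici 0 else Ioi (-1 / p.toReal)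

/-- `W_p^{α,β}`. -/
def WSet (p : ℝ≥0∞) (α β : ℝ) : Set (ℝ → ℝ) :=
  {f | Measurable f ∧ LpOn (fun x => jacobi α β x * f x) p (-1) 1 ≠ ⊤}

/-- `B_p^{α,β}`, the unit sphere of `W_p^{α,β}`. -/
def BSet (p : ℝ≥0∞) (α β : ℝ) : Set (ℝ → ℝ) :=
  {f | Measurable f ∧ LpOn (fun x => jacobi α β x * f x) p (-1) 1 = 1}

/-- Best weighted approximation `E_n(f)_{w,q}` by polynomials of degree at most `n`. -/
def En (n : ℕ) (f : ℝ → ℝ) (wt : ℝ → ℝ) (q : ℝ≥0∞) : ℝ≥0∞ :=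
  ⨅ P ∈ {P : Polynomial ℝ | P.natDegree ≤ n},
    LpOn (fun x => wt x * (f x - P.eval x)) q (-1) 1

/-- `E(X, P_n)_{w,q}`. -/
def EClass (X : Set (ℝ → ℝ)) (n : ℕ) (wt : ℝ → ℝ) (q : ℝ≥0∞) : ℝ≥0∞ :=
  ⨆ f ∈ X, En n f wt q

lemma aux_orth (S : Polynomial ℝ) (N : ℕ) (hN : N ≠ 0) (hS : S.natDegree < N) :
    ∫ x in (-1:ℝ)..1, S.eval x * (Polynomial.Chebyshev.T ℝ N).eval x * √(1 - x ^ 2)⁻¹ = 0 := by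
  have h1 := Polynomial.Chebyshev.integral_eq_sumZeroes (n := N)
    (P := S * Polynomial.Chebyshev.T ℝ N) hN (by
      refine lt_of_le_of_lt Polynomial.degree_le_natDegree ?_
      have h2 : (S * Polynomial.Chebyshev.T ℝ N).natDegree < 2 * N := by
        refine lt_of_le_of_lt Polynomial.natDegree_mul_le ?_
        rw [Polynomial.Chebyshev.natDegree_T]
        simp; omega
      exact_mod_cast h2)
  rw [Polynomial.Chebyshev.integral_measureT] at h1
  simp only [Polynomial.eval_mul] at h1
  rw [h1, Polynomial.Chebyshev.sumZeroes]
  have hN' : (N : ℝ) ≠ 0 := by exact_mod_cast hN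
  rw [Finset.sum_eq_zero, mul_zero]
  intro i _
  rw [Polynomial.eval_mul, Polynomial.Chebyshev.T_real_cos]
  have : Real.cos (((N : ℤ) : ℝ) * ((2 * i + 1) / (2 * N) * Real.pi)) = 0 := by
    rw [Real.cos_eq_zero_iff]
    refine ⟨i, ?_⟩
    push_cast
    field_simp
  rw [this, mul_zero]

lemma aux_orth2 (Q : Polynomial ℝ) (p N : ℕ) (hN : N ≠ 0) (hS : Q.natDegree + 2 * (p + 1) < N) :
    ∫ x in (-1:ℝ)..1, Q.eval x * ((1 - x ^ 2) ^ p * √(1 - x ^ 2) *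
      (Polynomial.Chebyshev.T ℝ N).eval x) = 0 := by
  have h := aux_orth (Q * (1 - Polynomial.X ^ 2) ^ (p + 1)) N hN (by
    refine lt_of_le_of_lt Polynomial.natDegree_mul_le ?_
    have h1 : ((1 - Polynomial.X ^ 2 : Polynomial ℝ) ^ (p + 1)).natDegree ≤ (p + 1) * 2 := by
      refine Polynomial.natDegree_pow_le_of_le _ ?_
      refine (Polynomial.natDegree_sub_le _ _).trans ?_
      simp
    omega)
  rw [← h]
  refine intervalIntegral.integral_congr fun x hx => ?_
  rw [uIcc_of_le (by norm_num)] at hx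
  have hx2 : 0 ≤ 1 - x ^ 2 := by nlinarith [hx.1, hx.2]
  simp only [Polynomial.eval_mul, Polynomial.eval_pow, Polynomial.eval_sub, Polynomial.eval_one,
    Polynomial.eval_X]
  rcases hx2.eq_or_lt with h0 | h0
  · rw [← h0]; simp
  · have h3 : √(1 - x ^ 2) ≠ 0 := (Real.sqrt_pos.2 h0).ne'
    have h4 : √(1 - x ^ 2) ^ 2 = 1 - x ^ 2 := Real.sq_sqrt hx2
    rw [Real.sqrt_inv, pow_succ (1 - x ^ 2) p]
    nth_rewrite 4 [← h4]
    field_simp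

def fejC (n : ℕ) (t : ℝ) : ℝ := ∑ j ∈ Finset.range n, Real.cos (j * t)
def fejS (n : ℕ) (t : ℝ) : ℝ := ∑ j ∈ Finset.range n, Real.sin (j * t)
def fejF (n : ℕ) (t : ℝ) : ℝ := fejC n t ^ 2 + fejS n t ^ 2

lemma fejF_nonneg (n : ℕ) (t : ℝ) : 0 ≤ fejF n t := by unfold fejF; positivity

lemma fejC_id (n : ℕ) (t : ℝ) : 2 * Real.sin (t / 2) * fejC n t =
    Real.sin (n * t - t / 2) + Real.sin (t / 2) := by
  induction n with
  | zero => simp [fejC]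
  | succ n ih =>
    have : fejC (n + 1) t = fejC n t + Real.cos (n * t) := by
      simp [fejC, Finset.sum_range_succ]
    rw [this, mul_add, ih]
    push_cast
    have e : ((n : ℝ) + 1) * t - t / 2 = n * t + t / 2 := by ring
    rw [e, Real.sin_add, Real.sin_sub]
    ring

lemma fejS_id (n : ℕ) (t : ℝ) : 2 * Real.sin (t / 2) * fejS n t =
    Real.cos (t / 2) - Real.cos (n * t - t / 2) := by
  induction n with
  | zero => simp [fejS]
  | succ n ih =>
    have : fejS (n + 1) t = fejS n t + Real.sin (n * t) := by
      simp [fejS, Finset.sum_range_succ]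
    rw [this, mul_add, ih]
    push_cast
    have e : ((n : ℝ) + 1) * t - t / 2 = n * t + t / 2 := by ring
    rw [e, Real.cos_add, Real.cos_sub]
    ring

lemma fejF_decay (n : ℕ) (t : ℝ) : fejF n t * Real.sin (t / 2) ^ 2 ≤ 1 := by
  have h1 := fejC_id n t
  have h2 := fejS_id n t
  set a := n * t - t / 2
  have h : 4 * (fejF n t * Real.sin (t / 2) ^ 2) = (Real.sin a + Real.sin (t / 2)) ^ 2 +
      (Real.cos (t / 2) - Real.cos a) ^ 2 := by
    rw [← h1, ← h2]; unfold fejF; ring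
  have h3 := Real.sin_sq_add_cos_sq a
  have h4 := Real.sin_sq_add_cos_sq (t / 2)
  nlinarith [sq_nonneg (Real.sin a - Real.sin (t / 2)), sq_nonneg (Real.cos a + Real.cos (t/2))]

lemma fejF_eq (n : ℕ) (t : ℝ) : fejF n t =
    ∑ j ∈ Finset.range n, ∑ l ∈ Finset.range n, Real.cos ((j - l : ℝ) * t) := by
  unfold fejF fejC fejS
  rw [sq, sq, Finset.sum_mul_sum, Finset.sum_mul_sum, ← Finset.sum_add_distrib]
  refine Finset.sum_congr rfl fun j _ => ?_
  rw [← Finset.sum_add_distrib]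
  refine Finset.sum_congr rfl fun l _ => ?_
  rw [sub_mul, Real.cos_sub]

lemma fejF_le (n : ℕ) (t : ℝ) : fejF n t ≤ (n : ℝ) ^ 2 := by
  rw [fejF_eq]
  calc _ ≤ ∑ j ∈ Finset.range n, ∑ l ∈ Finset.range n, (1 : ℝ) :=
        Finset.sum_le_sum fun j _ => Finset.sum_le_sum fun l _ => Real.cos_le_one _
    _ = _ := by simp; ring

lemma fejF_ge (n : ℕ) (t : ℝ) (h : n * |t| ≤ 1) : (n : ℝ) ^ 2 / 4 ≤ fejF n t := by
  have h1 : (n : ℝ) * (1 / 2) ≤ fejC n t := by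
    unfold fejC
    calc (n : ℝ) * (1 / 2) = ∑ j ∈ Finset.range n, (1 / 2 : ℝ) := by simp
      _ ≤ _ := by
        refine Finset.sum_le_sum fun j hj => ?_
        have hj' : (j : ℝ) ≤ n := by exact_mod_cast (Finset.mem_range.1 hj).le
        have h2 : |(j : ℝ) * t| ≤ 1 := by
          rw [abs_mul, Nat.abs_cast]
          exact (mul_le_mul_of_nonneg_right hj' (abs_nonneg t)).trans h
        have h3 := Real.one_sub_sq_div_two_le_cos (x := j * t)
        have h4 : ((j : ℝ) * t) ^ 2 ≤ 1 := by
          rw [← sq_abs]; nlinarith [abs_nonneg ((j : ℝ) * t)]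
        linarith
  unfold fejF
  have : (0 : ℝ) ≤ n := by positivity
  nlinarith [sq_nonneg (fejS n t)]

lemma aux_fejer (n : ℕ) (θ₀ : ℝ) : ∃ R : Polynomial ℝ, R.natDegree ≤ n ∧
    ∀ θ, R.eval (Real.cos θ) = (fejF n (θ - θ₀) + fejF n (θ + θ₀)) / n ^ 2 := by
  refine ⟨Polynomial.C (1 / (n : ℝ) ^ 2) * ∑ j ∈ Finset.range n, ∑ l ∈ Finset.range n,
    Polynomial.C (2 * Real.cos ((j - l : ℝ) * θ₀)) *
      Polynomial.Chebyshev.T ℝ ((j : ℤ) - (l : ℤ)), ?_, ?_⟩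
  · refine (Polynomial.natDegree_C_mul_le _ _).trans ?_
    refine Polynomial.natDegree_sum_le_of_forall_le _ _ fun j hj => ?_
    refine Polynomial.natDegree_sum_le_of_forall_le _ _ fun l hl => ?_
    refine (Polynomial.natDegree_C_mul_le _ _).trans ?_
    rw [Polynomial.Chebyshev.natDegree_T]
    have := Finset.mem_range.1 hj
    have := Finset.mem_range.1 hl
    omega
  · intro θ
    simp only [Polynomial.eval_mul, Polynomial.eval_C, Polynomial.eval_finsetSum,
      Polynomial.Chebyshev.T_real_cos]
    rw [fejF_eq, fejF_eq, ← Finset.sum_add_distrib, mul_comm, mul_one_div]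
    congr 1
    refine Finset.sum_congr rfl fun j _ => ?_
    rw [← Finset.sum_add_distrib]
    refine Finset.sum_congr rfl fun l _ => ?_
    push_cast
    rw [mul_sub, mul_add, Real.cos_sub, Real.cos_add]
    ring

lemma aux_upper (α β : ℝ) (p : ℕ) (hα : 0 ≤ α) (hβ : 0 ≤ β) (hαp : α ≤ p) (hβp : β ≤ p)
    (x X T R s : ℝ) (hx1 : -1 ≤ x) (hx2 : x ≤ 1) (hX : 0 < X) (hT : 1 ≤ T) (hR0 : 0 ≤ R)
    (hR : R ≤ 8 / T ^ 2) (h1 : 1 - x ≤ 2 * T ^ 2 * X) (hs : |s| ≤ 5 * T ^ 2) :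
    ((1 - x ^ 2) ^ p * √(1 - x ^ 2) * R ^ (p + 3) / (X ^ p * √X)) * (1 + s ^ 2) * X ^ β ≤
      (2 ^ ((p : ℝ) + 1 / 2) * 2 ^ ((p : ℝ) + 1 / 2) * 8 ^ (p + 3) * 26) *
        ((1 + x) ^ α * (1 - x) ^ β) := by
  set γ : ℝ := (p : ℝ) + 1 / 2 with hγ
  have hp0 : (0 : ℝ) ≤ p := by positivity
  have half : ∀ y : ℝ, 0 ≤ y → y ^ p * √y = y ^ γ := by
    intro y hy
    rw [hγ, Real.rpow_add_of_nonneg hy hp0 (by norm_num), Real.rpow_natCast, Real.sqrt_eq_rpow]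
  have hy1 : 0 ≤ 1 + x := by linarith
  have hy2 : 0 ≤ 1 - x := by linarith
  have e1 : (1 - x ^ 2) ^ p * √(1 - x ^ 2) = (1 + x) ^ γ * (1 - x) ^ γ := by
    rw [half _ (by nlinarith), ← Real.mul_rpow hy1 hy2]; congr 1; ring
  have hγα : 0 ≤ γ - α := by linarith
  have hγβ : 0 ≤ γ - β := by linarith
  have hT0 : 0 < T := by linarith
  have b1 : (1 + x) ^ γ ≤ 2 ^ γ * (1 + x) ^ α := by
    have : γ = (γ - α) + α := by ring
    rw [this, Real.rpow_add_of_nonneg hy1 hγα hα, ← this]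
    refine mul_le_mul_of_nonneg_right ?_ (Real.rpow_nonneg hy1 _)
    calc (1 + x) ^ (γ - α) ≤ 2 ^ (γ - α) := Real.rpow_le_rpow hy1 (by linarith) hγα
      _ ≤ 2 ^ γ := Real.rpow_le_rpow_of_exponent_le (by norm_num) (by linarith)
  have b2 : (1 - x) ^ γ * X ^ β ≤ 2 ^ γ * T ^ (2 * p + 1) * (1 - x) ^ β * X ^ γ := by
    have : γ = (γ - β) + β := by ring
    have h3 : (1 - x) ^ (γ - β) ≤ 2 ^ γ * T ^ (2 * p + 1) * X ^ (γ - β) := by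
      calc (1 - x) ^ (γ - β) ≤ (2 * T ^ 2 * X) ^ (γ - β) := Real.rpow_le_rpow hy2 h1 hγβ
        _ = 2 ^ (γ - β) * (T ^ 2) ^ (γ - β) * X ^ (γ - β) := by
          rw [Real.mul_rpow (by positivity) hX.le, Real.mul_rpow (by norm_num) (by positivity)]
        _ ≤ 2 ^ γ * T ^ (2 * p + 1) * X ^ (γ - β) := by
          refine mul_le_mul_of_nonneg_right ?_ (Real.rpow_nonneg hX.le _)
          refine mul_le_mul ?_ ?_ (by positivity) (by positivity)
          · exact Real.rpow_le_rpow_of_exponent_le (by norm_num) (by linarith)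
          · calc (T ^ 2) ^ (γ - β) ≤ (T ^ 2) ^ γ :=
                  Real.rpow_le_rpow_of_exponent_le (by nlinarith) (by linarith)
              _ = T ^ (2 * p + 1) := by
                rw [← Real.rpow_natCast T 2, ← Real.rpow_mul hT0.le,
                  ← Real.rpow_natCast T (2 * p + 1)]
                congr 1; push_cast; rw [hγ]; ring
    calc (1 - x) ^ γ * X ^ β = (1 - x) ^ (γ - β) * (1 - x) ^ β * X ^ β := by
          conv_lhs => rw [this, Real.rpow_add_of_nonneg hy2 hγβ hβ]
      _ ≤ (2 ^ γ * T ^ (2 * p + 1) * X ^ (γ - β)) * (1 - x) ^ β * X ^ β := by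
          refine mul_le_mul_of_nonneg_right ?_ (Real.rpow_nonneg hX.le _)
          exact mul_le_mul_of_nonneg_right h3 (Real.rpow_nonneg hy2 _)
      _ = 2 ^ γ * T ^ (2 * p + 1) * (1 - x) ^ β * (X ^ (γ - β) * X ^ β) := by ring
      _ = _ := by rw [← Real.rpow_add hX, ← this]
  have b3 : R ^ (p + 3) * (1 + s ^ 2) * T ^ (2 * p + 1) ≤ 8 ^ (p + 3) * 26 := by
    have h4 : R ^ (p + 3) ≤ (8 / T ^ 2) ^ (p + 3) := pow_le_pow_left₀ hR0 hR _
    have h5 : 1 + s ^ 2 ≤ 26 * T ^ 4 := by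
      have : s ^ 2 ≤ (5 * T ^ 2) ^ 2 := by rw [← sq_abs]; exact pow_le_pow_left₀ (abs_nonneg _) hs 2
      have : 1 ≤ T ^ 4 := one_le_pow₀ hT
      nlinarith
    calc R ^ (p + 3) * (1 + s ^ 2) * T ^ (2 * p + 1)
        ≤ (8 / T ^ 2) ^ (p + 3) * (26 * T ^ 4) * T ^ (2 * p + 1) := by gcongr
      _ = 8 ^ (p + 3) * 26 * (1 / T) := by
          rw [div_pow, ← pow_mul]
          have : T ^ (2 * (p + 3)) = T ^ 4 * T ^ (2 * p + 1) * T := by ring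
          rw [this]; field_simp
      _ ≤ 8 ^ (p + 3) * 26 * 1 := by
          refine mul_le_mul_of_nonneg_left ?_ (by positivity)
          rw [div_le_one hT0]; exact hT
      _ = _ := by ring
  rw [half X hX.le, e1]
  have hXγ : 0 < X ^ γ := Real.rpow_pos_of_pos hX _
  rw [div_mul_eq_mul_div, div_mul_eq_mul_div, div_le_iff₀ hXγ]
  calc (1 + x) ^ γ * (1 - x) ^ γ * R ^ (p + 3) * (1 + s ^ 2) * X ^ β
      = (1 + x) ^ γ * ((1 - x) ^ γ * X ^ β) * (R ^ (p + 3) * (1 + s ^ 2)) := by ring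
    _ ≤ (2 ^ γ * (1 + x) ^ α) * (2 ^ γ * T ^ (2 * p + 1) * (1 - x) ^ β * X ^ γ) *
          (R ^ (p + 3) * (1 + s ^ 2)) := by
        refine mul_le_mul_of_nonneg_right ?_ (by positivity)
        exact mul_le_mul b1 b2 (by positivity) (by positivity)
    _ = (2 ^ γ * (1 + x) ^ α) * (2 ^ γ * (1 - x) ^ β * X ^ γ) *
          (R ^ (p + 3) * (1 + s ^ 2) * T ^ (2 * p + 1)) := by ring
    _ ≤ (2 ^ γ * (1 + x) ^ α) * (2 ^ γ * (1 - x) ^ β * X ^ γ) * (8 ^ (p + 3) * 26) := by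
        refine mul_le_mul_of_nonneg_left b3 (by positivity)
    _ = _ := by ring

lemma aux_R_bound (n : ℕ) (hn : 1 ≤ n) (θ θ₀ : ℝ) (h0 : 0 ≤ θ) (h1 : θ ≤ Real.pi)
    (h2 : 0 ≤ θ₀) (h3 : θ₀ ≤ Real.pi) :
    (fejF n (θ - θ₀) + fejF n (θ + θ₀)) / (n : ℝ) ^ 2 ≤
      8 / (1 + n * |Real.sin ((θ - θ₀) / 2)|) ^ 2 := by
  have hn0 : (0 : ℝ) < n := by exact_mod_cast hn
  set σ := Real.sin ((θ - θ₀) / 2) with hσ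
  have hcmp : σ ^ 2 ≤ Real.sin ((θ + θ₀) / 2) ^ 2 := by
    have e1 : (θ - θ₀) / 2 = θ / 2 - θ₀ / 2 := by ring
    have e2 : (θ + θ₀) / 2 = θ / 2 + θ₀ / 2 := by ring
    rw [hσ, e1, e2, Real.sin_sub, Real.sin_add]
    have s1 : 0 ≤ Real.sin (θ / 2) := Real.sin_nonneg_of_nonneg_of_le_pi (by linarith) (by linarith)
    have s2 : 0 ≤ Real.sin (θ₀ / 2) := Real.sin_nonneg_of_nonneg_of_le_pi (by linarith) (by linarith)
    have s3 : 0 ≤ Real.cos (θ / 2) := Real.cos_nonneg_of_mem_Icc ⟨by linarith, by linarith⟩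
    have s4 : 0 ≤ Real.cos (θ₀ / 2) := Real.cos_nonneg_of_mem_Icc ⟨by linarith, by linarith⟩
    nlinarith [mul_nonneg (mul_nonneg s1 s2) (mul_nonneg s3 s4)]
  have a1 := fejF_le n (θ - θ₀)
  have a2 := fejF_le n (θ + θ₀)
  have a3 := fejF_decay n (θ - θ₀)
  have a4 : fejF n (θ + θ₀) * σ ^ 2 ≤ 1 :=
    (mul_le_mul_of_nonneg_left hcmp (fejF_nonneg _ _)).trans (fejF_decay n (θ + θ₀))
  rw [← hσ] at a3
  set G := fejF n (θ - θ₀) + fejF n (θ + θ₀) with hG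
  have hG0 : 0 ≤ G := add_nonneg (fejF_nonneg _ _) (fejF_nonneg _ _)
  have a5 : G ≤ 2 * (n : ℝ) ^ 2 := by linarith
  have a6 : G * σ ^ 2 ≤ 2 := by rw [hG]; linarith
  have hσ0 := abs_nonneg σ
  rw [div_le_div_iff₀ (by positivity) (by positivity)]
  have hq : (1 + n * |σ|) ^ 2 ≤ 2 + 2 * n ^ 2 * σ ^ 2 := by
    rw [← sq_abs σ]; nlinarith [sq_nonneg (1 - n * |σ|)]
  calc G * (1 + n * |σ|) ^ 2 ≤ G * (2 + 2 * n ^ 2 * σ ^ 2) := mul_le_mul_of_nonneg_left hq hG0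
    _ = 2 * G + 2 * n ^ 2 * (G * σ ^ 2) := by ring
    _ ≤ 2 * (2 * (n : ℝ) ^ 2) + 2 * n ^ 2 * 2 := by gcongr
    _ = _ := by ring

lemma aux_geom (n : ℕ) (hn : 1 ≤ n) (θ θ₀ : ℝ) (h2 : 0 ≤ θ₀) (h3 : θ₀ ≤ Real.pi)
    (h0 : 0 ≤ θ) (h1 : θ ≤ Real.pi)
    (hX : 1 / (n : ℝ) ^ 2 ≤ 1 - Real.cos θ₀) :
    1 - Real.cos θ ≤ 2 * (1 + n * |Real.sin ((θ - θ₀) / 2)|) ^ 2 * (1 - Real.cos θ₀) ∧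
    |(Real.cos θ - Real.cos θ₀) / (√(1 - Real.cos θ₀) / n)| ≤
      5 * (1 + n * |Real.sin ((θ - θ₀) / 2)|) ^ 2 := by
  have hn0 : (0 : ℝ) < n := by exact_mod_cast hn
  set σ := Real.sin ((θ - θ₀) / 2) with hσ
  set X := 1 - Real.cos θ₀ with hXd
  have hX0 : 0 < X := lt_of_lt_of_le (by positivity) hX
  set z := √X with hz
  have hz0 : 0 < z := Real.sqrt_pos.2 hX0
  have hzz : z ^ 2 = X := Real.sq_sqrt hX0.le
  have hnz : 1 ≤ n * z := by
    rw [div_le_iff₀ (by positivity)] at hX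
    rw [← hzz] at hX
    nlinarith [mul_pos hn0 hz0]
  set y := Real.sin (θ₀ / 2) with hy
  have hy0 : 0 ≤ y := Real.sin_nonneg_of_nonneg_of_le_pi (by linarith) (by linarith)
  have hyX : 2 * y ^ 2 = X := by
    have := Real.cos_two_mul (θ₀ / 2)
    rw [show 2 * (θ₀ / 2) = θ₀ by ring] at this
    have h5 := Real.sin_sq_add_cos_sq (θ₀ / 2)
    rw [hXd, this]; linarith
  have hyz : y ≤ z := by nlinarith
  have hS0 := abs_nonneg σ
  set t := n * |σ| with ht
  have ht0 : 0 ≤ t := by positivity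
  have hσz : |σ| ≤ t * z := by
    rw [ht]
    nlinarith
  -- first
  have k1 : |Real.sin (θ / 2)| ≤ |σ| + y := by
    have e : θ / 2 = (θ - θ₀) / 2 + θ₀ / 2 := by ring
    rw [e, Real.sin_add, ← hσ, ← hy]
    refine (abs_add_le _ _).trans ?_
    rw [abs_mul, abs_mul, abs_of_nonneg hy0]
    have := Real.abs_cos_le_one (θ₀ / 2)
    have := Real.abs_cos_le_one ((θ - θ₀) / 2)
    nlinarith
  have k2 : |Real.sin ((θ + θ₀) / 2)| ≤ |σ| + 2 * y := by
    have e : (θ + θ₀) / 2 = (θ - θ₀) / 2 + 2 * (θ₀ / 2) := by ring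
    rw [e, Real.sin_add, ← hσ, Real.sin_two_mul, ← hy]
    refine (abs_add_le _ _).trans ?_
    rw [abs_mul, abs_mul, abs_mul, abs_mul, abs_of_nonneg hy0, abs_two]
    have g1 := Real.abs_cos_le_one (θ₀ / 2)
    have g2 := Real.abs_cos_le_one ((θ - θ₀) / 2)
    have g3 := Real.abs_cos_le_one (2 * (θ₀ / 2))
    have g4 : |Real.cos ((θ - θ₀) / 2)| * (2 * y * |Real.cos (θ₀ / 2)|) ≤ 1 * (2 * y * 1) := by
      gcongr
    nlinarith
  constructor
  · have e : 1 - Real.cos θ = 2 * |Real.sin (θ / 2)| ^ 2 := by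
      have := Real.cos_two_mul (θ / 2)
      rw [show 2 * (θ / 2) = θ by ring] at this
      have h5 := Real.sin_sq_add_cos_sq (θ / 2)
      rw [sq_abs, this]; linarith
    rw [e]
    have : |Real.sin (θ / 2)| ≤ (1 + t) * z := by nlinarith
    calc 2 * |Real.sin (θ / 2)| ^ 2 ≤ 2 * ((1 + t) * z) ^ 2 := by gcongr
      _ = 2 * (1 + t) ^ 2 * z ^ 2 := by ring
      _ = _ := by rw [hzz]
  · rw [Real.cos_sub_cos, ← hσ, abs_div, abs_of_pos (div_pos hz0 hn0), abs_mul, abs_mul,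
      div_le_iff₀ (by positivity)]
    have e : |(-2 : ℝ)| = 2 := by norm_num
    rw [e]
    calc 2 * |Real.sin ((θ + θ₀) / 2)| * |σ| ≤ 2 * ((t + 2) * z) * |σ| := by
          have : |Real.sin ((θ + θ₀) / 2)| ≤ (t + 2) * z := by nlinarith
          gcongr
      _ = 2 * (t + 2) * t * (z / n) := by rw [ht]; field_simp
      _ ≤ 5 * (1 + t) ^ 2 * (z / n) := by
          refine mul_le_mul_of_nonneg_right ?_ (by positivity)
          nlinarith

lemma aux_near (n : ℕ) (hn : 1 ≤ n) (θ θ₀ ε : ℝ) (h2 : 0 ≤ θ₀) (h3 : θ₀ ≤ Real.pi / 2)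
    (h0 : 0 ≤ θ) (h1 : θ ≤ Real.pi) (hX : 0 < 1 - Real.cos θ₀)
    (h : |Real.cos θ - Real.cos θ₀| ≤ ε * √(1 - Real.cos θ₀) / n) :
    n * |θ - θ₀| ≤ 4 * ε := by
  have hn0 : (0 : ℝ) < n := by exact_mod_cast hn
  set z := √(1 - Real.cos θ₀) with hz
  have hz0 : 0 < z := Real.sqrt_pos.2 hX
  have hzz : z ^ 2 = 1 - Real.cos θ₀ := Real.sq_sqrt hX.le
  set y := Real.sin (θ₀ / 2) with hy
  have hpi := Real.pi_pos
  have hy0 : 0 ≤ y := Real.sin_nonneg_of_nonneg_of_le_pi (by linarith) (by linarith)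
  have hyX : 2 * y ^ 2 = z ^ 2 := by
    have := Real.cos_two_mul (θ₀ / 2)
    rw [show 2 * (θ₀ / 2) = θ₀ by ring] at this
    have h5 := Real.sin_sq_add_cos_sq (θ₀ / 2)
    rw [hzz, this]; linarith
  have hyz : z ≤ 1.42 * y := by nlinarith
  -- sin ((θ+θ₀)/2) ≥ y
  have k : y ≤ Real.sin ((θ + θ₀) / 2) := by
    rcases le_total ((θ + θ₀) / 2) (Real.pi / 2) with hc | hc
    · exact Real.sin_le_sin_of_le_of_le_pi_div_two (by linarith) hc (by linarith)
    · rw [← Real.sin_pi_sub ((θ + θ₀) / 2)]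
      exact Real.sin_le_sin_of_le_of_le_pi_div_two (by linarith) (by linarith) (by linarith)
  have k2 : |θ - θ₀| / Real.pi ≤ |Real.sin ((θ - θ₀) / 2)| := by
    have := Real.mul_abs_le_abs_sin (x := (θ - θ₀) / 2) (by
      rw [abs_le]; constructor <;> linarith)
    refine le_trans (le_of_eq ?_) this
    rw [abs_div, abs_two]; field_simp
  rw [Real.cos_sub_cos, abs_mul, abs_mul] at h
  have e : |(-2 : ℝ)| = 2 := by norm_num
  rw [e, abs_of_nonneg (hy0.trans k), le_div_iff₀ hn0] at h
  have hypos : 0 < y := by nlinarith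
  have hε : 0 ≤ ε := by
    by_contra hc
    push Not at hc
    have : 0 ≤ 2 * Real.sin ((θ + θ₀) / 2) * |Real.sin ((θ - θ₀) / 2)| * n := by
      have := hy0.trans k
      positivity
    nlinarith
  have h7 : 2 * y * (|θ - θ₀| / Real.pi) * n ≤ ε * (1.42 * y) := by
    calc 2 * y * (|θ - θ₀| / Real.pi) * n ≤
        2 * Real.sin ((θ + θ₀) / 2) * |Real.sin ((θ - θ₀) / 2)| * n := by
          have := hy0.trans k
          gcongr
      _ ≤ ε * z := h
      _ ≤ _ := by gcongr
  have h8 : 2 * (|θ - θ₀| / Real.pi) * n ≤ ε * 1.42 := by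
    by_contra hc
    push Not at hc
    nlinarith
  have h9 : 2 * (|θ - θ₀| / Real.pi) * n = 2 * (n * |θ - θ₀|) / Real.pi := by ring
  rw [h9, div_le_iff₀ hpi] at h8
  have := Real.pi_lt_d2
  nlinarith

set_option maxHeartbeats 2000000 in
lemma aux_kernel (α β : ℝ) (hα : 0 ≤ α) (hβ : 0 ≤ β) : ∃ C > (0 : ℝ), ∃ c > (0 : ℝ),
    ∃ ε > (0 : ℝ), ∀ n : ℕ, 1 ≤ n → ∀ ξ : ℝ, 0 ≤ ξ → 1 / (n : ℝ) ^ 2 ≤ 1 - ξ →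
    ∃ u : ℝ → ℝ, Continuous u ∧
      (∀ Q : Polynomial ℝ, Q.natDegree ≤ n → ∫ x in (-1:ℝ)..1, Q.eval x * u x = 0) ∧
      (∀ x, -1 ≤ x → x ≤ 1 → |u x| * (1 + ((x - ξ) / (√(1 - ξ) / n)) ^ 2) * (1 - ξ) ^ β ≤
        C * ((1 + x) ^ α * (1 - x) ^ β)) ∧
      (∀ x, -1 ≤ x → x ≤ 1 → |x - ξ| ≤ ε * √(1 - ξ) / n → c ≤ u x) := by
  obtain ⟨p, hp⟩ := exists_nat_ge (max α β)
  have hαp : α ≤ p := (le_max_left _ _).trans hp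
  have hβp : β ≤ p := (le_max_right _ _).trans hp
  set κ : ℕ := 3 * p + 7 with hκ
  have hκ0 : (0 : ℝ) < κ := by positivity
  have hκ7 : (7 : ℝ) ≤ κ := by rw [hκ]; push_cast; linarith [(Nat.cast_nonneg p : (0:ℝ) ≤ p)]
  refine ⟨2 ^ ((p : ℝ) + 1 / 2) * 2 ^ ((p : ℝ) + 1 / 2) * 8 ^ (p + 3) * 26, by positivity,
    (1 / 4) ^ p * (1 / 2) * (1 / 4) ^ (p + 3) * (1 / 4), by positivity,
    1 / (32 * κ), by positivity, ?_⟩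
  intro n hn ξ hξ0 hξ
  have hn0 : (0 : ℝ) < n := by exact_mod_cast hn
  have hn1 : (1 : ℝ) ≤ n := by exact_mod_cast hn
  set X := 1 - ξ with hXd
  have hX0 : 0 < X := lt_of_lt_of_le (by positivity) hξ
  set θ₀ := Real.arccos ξ with hθ₀
  have hcos : Real.cos θ₀ = ξ := Real.cos_arccos (by linarith) (by linarith)
  have hθ0 : 0 ≤ θ₀ := Real.arccos_nonneg _
  have hθpi : θ₀ ≤ Real.pi := Real.arccos_le_pi _
  have hθh : θ₀ ≤ Real.pi / 2 := Real.arccos_le_pi_div_two.2 hξ0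
  obtain ⟨R, hRd, hR⟩ := aux_fejer n θ₀
  -- choice of frequency
  obtain ⟨M, hMlo, hMhi, hMξ⟩ : ∃ M : ℕ, κ * n ≤ M ∧ M ≤ 2 * (κ * n) ∧
      1 / 2 ≤ |Real.cos (M * θ₀)| := by
    by_cases hc : 1 / 2 ≤ |Real.cos ((κ * n : ℕ) * θ₀)|
    · exact ⟨κ * n, le_rfl, by omega, hc⟩
    · refine ⟨2 * (κ * n), by omega, le_rfl, ?_⟩
      push Not at hc
      have e : ((2 * (κ * n) : ℕ) : ℝ) * θ₀ = 2 * ((κ * n : ℕ) * θ₀) := by push_cast; ring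
      rw [e, Real.cos_two_mul, le_abs]
      right
      have := sq_abs (Real.cos ((κ * n : ℕ) * θ₀))
      nlinarith [abs_nonneg (Real.cos ((κ * n : ℕ) * θ₀))]
  obtain ⟨s, hs1, hs2⟩ : ∃ s : ℝ, |s| = 1 ∧ s * Real.cos (M * θ₀) = |Real.cos (M * θ₀)| := by
    rcases le_total 0 (Real.cos (M * θ₀)) with h | h
    · exact ⟨1, by simp, by rw [abs_of_nonneg h]; ring⟩
    · exact ⟨-1, by simp, by rw [abs_of_nonpos h]; ring⟩
  have hz0 : 0 < √X := Real.sqrt_pos.2 hX0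
  have hzz : √X ^ 2 = X := Real.sq_sqrt hX0.le
  set u : ℝ → ℝ := fun x => s * ((1 - x ^ 2) ^ p * √(1 - x ^ 2) * R.eval x ^ (p + 3) /
    (X ^ p * √X)) * (Polynomial.Chebyshev.T ℝ M).eval x with hu
  refine ⟨u, ?_, ?_, ?_, ?_⟩
  · rw [hu]
    fun_prop
  · intro Q hQ
    have hdeg : (Q * R ^ (p + 3)).natDegree + 2 * (p + 1) < M := by
      have h1 : (Q * R ^ (p + 3)).natDegree ≤ n + (p + 3) * n :=
        Polynomial.natDegree_mul_le.trans
          (add_le_add hQ (Polynomial.natDegree_pow_le_of_le _ hRd))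
      have h2 : n + (p + 3) * n + 2 * (p + 1) < κ * n := by
        rw [hκ]; nlinarith
      omega
    have h := aux_orth2 (Q * R ^ (p + 3)) p M (by omega) hdeg
    rw [← mul_zero (s / (X ^ p * √X)), ← h, ← intervalIntegral.integral_const_mul]
    refine intervalIntegral.integral_congr fun x _ => ?_
    simp only [hu, Polynomial.eval_mul, Polynomial.eval_pow]
    ring
  · intro x hx1 hx2
    set θ := Real.arccos x with hθ
    have hcx : Real.cos θ = x := Real.cos_arccos hx1 hx2
    have hA := aux_R_bound n hn θ θ₀ (Real.arccos_nonneg _) (Real.arccos_le_pi _) hθ0 hθpi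
    have hG := aux_geom n hn θ θ₀ hθ0 hθpi (Real.arccos_nonneg _) (Real.arccos_le_pi _)
      (by rw [hcos]; exact hξ)
    rw [hcx, hcos] at hG
    have hRx := hR θ
    rw [hcx] at hRx
    rw [← hRx] at hA
    have hR0 : 0 ≤ R.eval x := by
      rw [hRx]
      have := fejF_nonneg n (θ - θ₀)
      have := fejF_nonneg n (θ + θ₀)
      positivity
    have hT1 : 1 ≤ 1 + n * |Real.sin ((θ - θ₀) / 2)| := by
      have : 0 ≤ n * |Real.sin ((θ - θ₀) / 2)| := by positivity
      linarith
    have hU := aux_upper α β p hα hβ hαp hβp x X _ (R.eval x) ((x - ξ) / (√(1 - ξ) / n)) hx1 hx2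
      hX0 hT1 hR0 hA hG.1 hG.2
    refine le_trans ?_ hU
    have hx2' : 0 ≤ 1 - x ^ 2 := by nlinarith
    have hV0 : 0 ≤ (1 - x ^ 2) ^ p * √(1 - x ^ 2) * R.eval x ^ (p + 3) / (X ^ p * √X) := by
      positivity
    have hub : |u x| ≤ (1 - x ^ 2) ^ p * √(1 - x ^ 2) * R.eval x ^ (p + 3) / (X ^ p * √X) := by
      simp only [hu]
      rw [abs_mul, abs_mul, hs1, one_mul, abs_of_nonneg hV0]
      refine mul_le_of_le_one_right hV0 ?_
      rw [← hcx, Polynomial.Chebyshev.T_real_cos]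
      exact Real.abs_cos_le_one _
    gcongr
  · intro x hx1 hx2 hxe
    set θ := Real.arccos x with hθ
    have hcx : Real.cos θ = x := Real.cos_arccos hx1 hx2
    have hnear := aux_near n hn θ θ₀ (1 / (32 * κ)) hθ0 hθh (Real.arccos_nonneg _)
      (Real.arccos_le_pi _) (by rw [hcos]; exact hX0) (by rw [hcx, hcos]; exact hxe)
    have hRx := hR θ
    rw [hcx] at hRx
    have hn2 : n * |θ - θ₀| ≤ 1 := by
      refine hnear.trans ?_
      rw [mul_one_div, div_le_one (by positivity)]; linarith
    have hRlo : 1 / 4 ≤ R.eval x := by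
      rw [hRx, le_div_iff₀ (by positivity)]
      have := fejF_ge n (θ - θ₀) hn2
      have := fejF_nonneg n (θ + θ₀)
      linarith
    have hTlo : 1 / 4 ≤ s * (Polynomial.Chebyshev.T ℝ M).eval x := by
      rw [← hcx, Polynomial.Chebyshev.T_real_cos]
      have hd : |Real.cos (M * θ) - Real.cos (M * θ₀)| ≤ 1 / 4 := by
        refine (Real.abs_cos_sub_cos_le _ _).trans ?_
        rw [← mul_sub, abs_mul, Nat.abs_cast]
        have hM : (M : ℝ) ≤ 2 * (κ * n) := by exact_mod_cast hMhi
        calc (M : ℝ) * |θ - θ₀| ≤ 2 * (κ * n) * |θ - θ₀| := by gcongr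
          _ = 2 * κ * (n * |θ - θ₀|) := by ring
          _ ≤ 2 * κ * (4 * (1 / (32 * κ))) := by gcongr
          _ = 1 / 4 := by field_simp; norm_num
      have e : s * Real.cos ((M : ℤ) * θ) = |Real.cos (M * θ₀)| +
          s * (Real.cos (M * θ) - Real.cos (M * θ₀)) := by
        rw [← hs2]; push_cast; ring
      rw [e]
      have : |s * (Real.cos (M * θ) - Real.cos (M * θ₀))| ≤ 1 / 4 := by
        rw [abs_mul, hs1, one_mul]; exact hd
      have := (abs_le.1 this).1
      linarith
    -- weight
    have hzn : 1 ≤ n * √X := by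
      rw [div_le_iff₀ (by positivity), ← hzz] at hξ
      nlinarith [mul_pos hn0 hz0]
    have hzle : √X ≤ 1 := Real.sqrt_le_one.2 (by linarith)
    have hεδ : 1 / (32 * κ) * √X / n ≤ X / 2 := by
      have h1 : 1 / (32 * (κ : ℝ)) ≤ 1 / 2 := by
        apply one_div_le_one_div_of_le <;> linarith
      rw [div_le_iff₀ hn0]
      calc 1 / (32 * κ) * √X ≤ 1 / 2 * √X := by gcongr
        _ ≤ 1 / 2 * √X * (n * √X) := le_mul_of_one_le_right (by positivity) hzn
        _ = √X ^ 2 / 2 * n := by ring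
        _ = _ := by rw [hzz]
    have hxa := abs_le.1 (hxe.trans hεδ)
    have hXle : X ≤ 1 := by linarith
    have hw : X / 4 ≤ 1 - x ^ 2 := by
      have h1 : X / 2 ≤ 1 - x := by linarith [hxa.2]
      have h2 : 1 / 2 ≤ 1 + x := by linarith [hxa.1]
      nlinarith
    have hw0 : 0 ≤ 1 - x ^ 2 := le_trans (by positivity) hw
    have hV : (1 / 4) ^ p * (1 / 2) * (1 / 4) ^ (p + 3) ≤
        (1 - x ^ 2) ^ p * √(1 - x ^ 2) * R.eval x ^ (p + 3) / (X ^ p * √X) := by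
      rw [le_div_iff₀ (by positivity)]
      have hsq : √X * (1 / 2) ≤ √(1 - x ^ 2) := by
        apply Real.le_sqrt_of_sq_le
        rw [mul_pow, hzz]; linarith
      calc (1 / 4) ^ p * (1 / 2) * (1 / 4) ^ (p + 3) * (X ^ p * √X)
          = (X / 4) ^ p * (√X * (1 / 2)) * (1 / 4) ^ (p + 3) := by
            rw [div_pow X 4 p, one_div_pow]; ring
        _ ≤ _ := by gcongr
    have e : u x = ((1 - x ^ 2) ^ p * √(1 - x ^ 2) * R.eval x ^ (p + 3) / (X ^ p * √X)) *
        (s * (Polynomial.Chebyshev.T ℝ M).eval x) := by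
      simp only [hu]; ring
    rw [e]
    exact mul_le_mul hV hTlo (by norm_num) (le_trans (by positivity) hV)

def tpw (j : ℕ) (x : ℝ) : ℝ := if 0 ≤ x then x ^ j else 0

lemma tpw_measurable (j : ℕ) : Measurable (tpw j) := by
  unfold tpw
  exact Measurable.ite measurableSet_Ici (by fun_prop) measurable_const

lemma tpw_mono (j : ℕ) : Monotone (tpw j) := by
  intro x y hxy
  unfold tpw
  split_ifs with h1 h2
  · gcongr
  · linarith
  · positivity
  · exact le_rfl

lemma tpw_of_nonpos (j : ℕ) {x : ℝ} (hx : x ≤ 0) : tpw (j + 1) x = 0 := by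
  unfold tpw
  split_ifs with h
  · have : x = 0 := le_antisymm hx h
    simp [this]
  · rfl

lemma tpw_eq_max (j : ℕ) (x : ℝ) : tpw (j + 1) x = (max x 0) ^ (j + 1) := by
  rcases le_total x 0 with h | h
  · rw [tpw_of_nonpos j h, max_eq_right h]; simp
  · rw [max_eq_left h, tpw, if_pos h]

def Prm (c : ℝ) (F φ : ℝ → ℝ) : Prop :=
  (∀ x y, IntervalIntegrable φ volume x y) ∧ ∀ x y, F y - F x = c * ∫ t in x..y, φ t

lemma tpw_prm (j : ℕ) : Prm (j + 1) (tpw (j + 1)) (tpw j) := by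
  have hint : ∀ x y, IntervalIntegrable (tpw j) volume x y := fun x y =>
    (tpw_mono j).intervalIntegrable
  refine ⟨hint, fun x y => ?_⟩
  rw [← intervalIntegral.integral_const_mul]
  symm
  refine intervalIntegral.integral_eq_sub_of_hasDeriv_right ?_ ?_ ((hint x y).const_mul _)
  · have : tpw (j + 1) = fun x => (max x 0) ^ (j + 1) := funext (tpw_eq_max j)
    rw [this]
    fun_prop
  · intro t _
    rcases le_or_gt 0 t with h | h
    · have h1 : HasDerivWithinAt (fun x : ℝ => x ^ (j + 1)) ((j + 1 : ℝ) * tpw j t) (Ioi t) t := by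
        have := (hasDerivAt_pow (j + 1) t).hasDerivWithinAt (s := Ioi t)
        simpa [tpw, if_pos h] using this
      refine h1.congr ?_ ?_
      · intro s hs
        have : 0 ≤ s := h.trans (le_of_lt hs)
        simp [tpw, this]
      · simp [tpw, h]
    · have h1 : HasDerivAt (tpw (j + 1)) ((j + 1 : ℝ) * tpw j t) t := by
        have h2 : (j + 1 : ℝ) * tpw j t = 0 := by simp [tpw, not_le.2 h]
        rw [h2]
        refine (hasDerivAt_const t (0 : ℝ)).congr_of_eventuallyEq ?_
        filter_upwards [Iio_mem_nhds h] with s hs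
        simp [tpw_of_nonpos j (le_of_lt hs)]
      exact h1.hasDerivWithinAt

lemma Prm.diff {c : ℝ} {F φ : ℝ → ℝ} (H : Prm c F φ) (h : ℝ) :
    Prm c (fwdDiff h F) (fwdDiff h φ) := by
  have hsh : ∀ x y, IntervalIntegrable (fun t => φ (t + h)) volume x y := fun x y => by
    have := (H.1 (x + h) (y + h)).comp_add_right h
    simpa using this
  refine ⟨fun x y => (hsh x y).sub (H.1 x y), fun x y => ?_⟩
  simp only [fwdDiff]
  rw [intervalIntegral.integral_sub (hsh x y) (H.1 x y), intervalIntegral.integral_comp_add_right,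
    mul_sub, ← H.2, ← H.2]
  ring

lemma Prm.diff_iter {c : ℝ} {F φ : ℝ → ℝ} (H : Prm c F φ) (h : ℝ) (m : ℕ) :
    Prm c ((fwdDiff h)^[m] F) ((fwdDiff h)^[m] φ) := by
  induction m with
  | zero => simpa using H
  | succ m ih =>
    rw [Function.iterate_succ_apply', Function.iterate_succ_apply']
    exact ih.diff h

def bsp (h : ℝ) (j : ℕ) : ℝ → ℝ := (fwdDiff h)^[j + 1] (tpw j)

lemma bsp_intervalIntegrable (h : ℝ) (j : ℕ) (x y : ℝ) :
    IntervalIntegrable (bsp h j) volume x y := ((tpw_prm j).diff_iter h (j + 1)).1 x y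

lemma bsp_succ (h : ℝ) (j : ℕ) (x : ℝ) :
    bsp h (j + 1) x = (j + 1) * ∫ t in x..(x + h), bsp h j t := by
  unfold bsp
  rw [Function.iterate_succ_apply', fwdDiff, ((tpw_prm j).diff_iter h (j + 1)).2]

lemma bsp_zero (h : ℝ) (x : ℝ) : bsp h 0 x = tpw 0 (x + h) - tpw 0 x := by
  simp [bsp, fwdDiff]

lemma bsp_nonneg (h : ℝ) (hh : 0 < h) (j : ℕ) : ∀ x, 0 ≤ bsp h j x := by
  induction j with
  | zero =>
    intro x
    rw [bsp_zero, sub_nonneg]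
    exact tpw_mono 0 (by linarith)
  | succ j ih =>
    intro x
    rw [bsp_succ]
    refine mul_nonneg (by positivity) ?_
    exact intervalIntegral.integral_nonneg (by linarith) fun t _ => ih t

lemma bsp_right (h : ℝ) (hh : 0 < h) (j : ℕ) : ∀ x, 0 ≤ x → bsp h j x = 0 := by
  induction j with
  | zero =>
    intro x hx
    have : 0 ≤ x + h := by linarith
    rw [bsp_zero]; simp [tpw, hx, this]
  | succ j ih =>
    intro x hx
    rw [bsp_succ, intervalIntegral.integral_congr (g := fun _ => 0)]
    · simp
    · intro t ht
      rw [uIcc_of_le (by linarith)] at ht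
      exact ih t (hx.trans ht.1)

lemma bsp_left (h : ℝ) (hh : 0 < h) (j : ℕ) : ∀ x, x < -((j + 1 : ℝ) * h) → bsp h j x = 0 := by
  induction j with
  | zero =>
    intro x hx
    have h1 : x + h < 0 := by push_cast at hx; linarith
    have h2 : x < 0 := by linarith
    rw [bsp_zero]; simp [tpw, not_le.2 h1, not_le.2 h2]
  | succ j ih =>
    intro x hx
    rw [bsp_succ, intervalIntegral.integral_congr (g := fun _ => 0)]
    · simp
    · intro t ht
      rw [uIcc_of_le (by linarith)] at ht
      refine ih t ?_
      push_cast at hx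
      linarith [ht.2]

lemma bsp_integral (h : ℝ) (hh : 0 < h) (j : ℕ) :
    ∫ t in (-((j + 1 : ℝ) * h))..0, bsp h j t = (j.factorial : ℝ) * h ^ (j + 1) := by
  have H := ((tpw_prm j).diff_iter h (j + 1)).2 (-((j + 1 : ℝ) * h)) 0
  have z : (fwdDiff h)^[j + 1] (tpw (j + 1)) (-((j + 1 : ℝ) * h)) = 0 := by
    rw [fwdDiff_iter_eq_sum_shift]
    refine Finset.sum_eq_zero fun i hi => ?_
    rw [tpw_of_nonpos, smul_zero]
    have : (i : ℝ) ≤ j + 1 := by exact_mod_cast Nat.lt_succ_iff.1 (Finset.mem_range.1 hi)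
    rw [nsmul_eq_mul]
    nlinarith
  have t : (fwdDiff h)^[j + 1] (tpw (j + 1)) 0 = ((j + 1).factorial : ℝ) * h ^ (j + 1) := by
    have e := congrFun (fwdDiff_iter_eq_factorial (R := ℝ) (n := j + 1)) 0
    rw [fwdDiff_iter_eq_sum_shift] at e ⊢
    have e2 : ((((j + 1).factorial : ℕ) : ℝ → ℝ)) 0 = ((j + 1).factorial : ℝ) := by simp
    rw [← e2, ← e, Finset.sum_mul]
    refine Finset.sum_congr rfl fun i _ => ?_
    have h0 : 0 ≤ (0 : ℝ) + i • h := by rw [nsmul_eq_mul]; positivity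
    rw [tpw, if_pos h0]
    simp [mul_pow]
    ring
  rw [z, t, sub_zero, Nat.factorial_succ] at H
  have hj : (j + 1 : ℝ) ≠ 0 := by positivity
  push_cast at H
  rw [mul_assoc] at H
  exact (mul_left_cancel₀ hj H).symm

lemma aux_holder (q : ℝ≥0∞) (hq : 1 ≤ q) (ξ δ A : ℝ) (hδ : 0 < δ) (hA : 0 ≤ A)
    (D g wt : ℝ → ℝ) (hD : Measurable D) (hw : Measurable wt)
    (hg : ∀ x, -1 ≤ x → x ≤ 1 → |g x| * (1 + ((x - ξ) / δ) ^ 2) ≤ A * wt x) :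
    ENNReal.ofReal (∫ x in Icc (-1 : ℝ) 1, D x * g x) ≤
      ENNReal.ofReal A * (LpOn (fun x => wt x * D x) q (-1) 1 *
        ENNReal.ofReal (Real.pi * δ) ^ (1 - 1 / q.toReal)) := by
  set ρ : ℝ → ℝ := fun x => (1 + ((x - ξ) / δ) ^ 2)⁻¹ with hρ
  have hρm : Measurable ρ := by rw [hρ]; fun_prop
  have hρ0 : ∀ x, 0 ≤ ρ x := fun x => by simp only [hρ]; positivity
  have hρ1 : ∀ x, ρ x ≤ 1 := fun x => by
    simp only [hρ]; exact inv_le_one_of_one_le₀ (by nlinarith [sq_nonneg ((x - ξ) / δ)])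
  set μ : Measure ℝ := volume.restrict (Icc (-1 : ℝ) 1) with hμ
  set ν : Measure ℝ := μ.withDensity (fun x => ENNReal.ofReal (ρ x)) with hν
  have hνμ : ν ≤ μ := by
    rw [hν]
    calc μ.withDensity (fun x => ENNReal.ofReal (ρ x)) ≤ μ.withDensity 1 :=
          withDensity_mono (ae_of_all _ fun x => by simpa using hρ1 x)
      _ = μ := withDensity_one
  have hint : Integrable ρ := by
    have := (integrable_inv_one_add_sq.comp_div hδ.ne').comp_sub_right ξ
    simpa [hρ] using this
  have hintv : ∫ x, ρ x = Real.pi * δ := by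
    have h1 := integral_sub_right_eq_self (μ := volume) (fun x : ℝ => (1 + (x / δ) ^ 2)⁻¹) ξ
    simp only [hρ]
    rw [h1, Measure.integral_comp_div (fun x : ℝ => (1 + x ^ 2)⁻¹) δ, integral_univ_inv_one_add_sq,
      abs_of_pos hδ, smul_eq_mul, mul_comm]
  have hνu : ν univ ≤ ENNReal.ofReal (Real.pi * δ) := by
    rw [hν, withDensity_apply _ MeasurableSet.univ, Measure.restrict_univ, ← hintv,
      ofReal_integral_eq_lintegral_ofReal hint (ae_of_all _ hρ0)]
    exact lintegral_mono' Measure.restrict_le_self le_rfl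
  set H : ℝ → ℝ := fun x => wt x * D x with hH
  have hHm : Measurable H := hw.mul hD
  have step1 : ENNReal.ofReal (∫ x in Icc (-1 : ℝ) 1, D x * g x) ≤
      ENNReal.ofReal A * ∫⁻ x, ‖H x‖ₑ ∂ν := by
    calc ENNReal.ofReal (∫ x in Icc (-1 : ℝ) 1, D x * g x)
        ≤ ‖∫ x in Icc (-1 : ℝ) 1, D x * g x‖ₑ := by
          rw [← ofReal_norm]
          exact ENNReal.ofReal_le_ofReal (le_abs_self _)
      _ ≤ ∫⁻ x in Icc (-1 : ℝ) 1, ‖D x * g x‖ₑ := enorm_integral_le_lintegral_enorm _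
      _ ≤ ∫⁻ x in Icc (-1 : ℝ) 1, ENNReal.ofReal A * (ENNReal.ofReal (ρ x) * ‖H x‖ₑ) := by
          refine setLIntegral_mono' measurableSet_Icc fun x hx => ?_
          rw [← ofReal_norm, ← ofReal_norm, ← ENNReal.ofReal_mul (hρ0 x),
            ← ENNReal.ofReal_mul hA]
          refine ENNReal.ofReal_le_ofReal ?_
          have hpos : 0 < 1 + ((x - ξ) / δ) ^ 2 := by positivity
          have h2 := hg x hx.1 hx.2
          rw [← le_div_iff₀ hpos] at h2
          simp only [hH, hρ, Real.norm_eq_abs, abs_mul]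
          calc |D x| * |g x| ≤ |D x| * (A * wt x / (1 + ((x - ξ) / δ) ^ 2)) := by gcongr
            _ ≤ |D x| * (A * |wt x| / (1 + ((x - ξ) / δ) ^ 2)) := by
                gcongr; exact le_abs_self _
            _ = _ := by rw [div_eq_mul_inv]; ring
      _ = ENNReal.ofReal A * ∫⁻ x, ‖H x‖ₑ ∂ν := by
          rw [lintegral_const_mul _ (by fun_prop), hν,
            lintegral_withDensity_eq_lintegral_mul _ (by fun_prop) (by fun_prop)]
          rfl
  refine step1.trans ?_
  gcongr
  rw [← eLpNorm_one_eq_lintegral_enorm]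
  refine (eLpNorm_le_eLpNorm_mul_rpow_measure_univ hq hHm.aestronglyMeasurable).trans ?_
  have hexp : 0 ≤ 1 - 1 / q.toReal := by
    rcases eq_or_ne q ∞ with rfl | hqt
    · simp
    · have : 1 ≤ q.toReal := by
        have := ENNReal.toReal_mono hqt hq
        simpa using this
      rw [sub_nonneg, div_le_one (by linarith)]; exact this
  rw [ENNReal.toReal_one, div_one]
  refine mul_le_mul' (eLpNorm_mono_measure _ hνμ) (ENNReal.rpow_le_rpow hνu hexp)

lemma jacobi_measurable (α β : ℝ) : Measurable (jacobi α β) := by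
  unfold jacobi
  fun_prop

lemma aux_shift (D v : ℝ → ℝ) (b s : ℝ) (hs : 0 ≤ s) (hsb : s ≤ 1 - b) :
    ∫ x in Icc (-1 : ℝ) 1, D x * (Icc (-1 : ℝ) b).indicator v (x - s) =
      ∫ x in Icc (-1 : ℝ) b, D (x + s) * v x := by
  rw [setIntegral_eq_integral_of_forall_compl_eq_zero]
  · rw [← integral_add_right_eq_self _ s, ← integral_indicator measurableSet_Icc]
    congr 1
    ext x
    rw [add_sub_cancel_right]
    by_cases hx : x ∈ Icc (-1 : ℝ) b
    · rw [indicator_of_mem hx, indicator_of_mem hx]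
    · rw [indicator_of_notMem hx, indicator_of_notMem hx, mul_zero]
  · intro x hx
    rw [indicator_of_notMem, mul_zero]
    intro h
    exact hx ⟨by linarith [h.1], by linarith [h.2]⟩

lemma aux_shift_int (D v : ℝ → ℝ) (hv : Continuous v) (hD : LocallyIntegrable D volume)
    (b s : ℝ) : IntegrableOn (fun x => D (x + s) * v x) (Icc (-1 : ℝ) b) := by
  have h1 : IntegrableOn D (Icc (-1 + s) (b + s)) := hD.integrableOn_isCompact isCompact_Icc
  have h2 : IntegrableOn (fun x => D (x + s)) (Icc (-1 : ℝ) b) := by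
    have := (measurePreserving_add_right volume s).integrableOn_comp_preimage
      (measurableEmbedding_addRight s) (f := D) (s := Icc (-1 + s) (b + s))
    rw [← this] at h1
    simpa [Function.comp_def] using h1
  exact h2.mul_continuousOn hv.continuousOn isCompact_Icc

lemma aux_shift_int2 (D v : ℝ → ℝ) (hv : Continuous v) (hD : LocallyIntegrable D volume)
    (b s : ℝ) (hs : 0 ≤ s) (hsb : s ≤ 1 - b) :
    IntegrableOn (fun x => D x * (Icc (-1 : ℝ) b).indicator v (x - s)) (Icc (-1 : ℝ) 1) := by
  have h1 : IntegrableOn D (Icc (-1) 1) := hD.integrableOn_isCompact isCompact_Icc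
  have h2 := h1.mul_continuousOn (g' := fun x => v (x - s)) (by fun_prop) isCompact_Icc
  have h3 := h2.indicator (t := (fun x => x - s) ⁻¹' (Icc (-1 : ℝ) b))
    (measurableSet_Icc.preimage (by fun_prop))
  refine h3.congr (ae_of_all _ fun x => ?_)
  by_cases hx : x - s ∈ Icc (-1 : ℝ) b
  · simp only [indicator_of_mem hx]
    rw [indicator_of_mem (s := (fun x => x - s) ⁻¹' (Icc (-1 : ℝ) b)) hx]
  · simp only [indicator_of_notMem hx, mul_zero]
    rw [indicator_of_notMem (s := (fun x => x - s) ⁻¹' (Icc (-1 : ℝ) b)) hx]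

lemma aux_par (ξ m : ℝ) (hξ0 : 0 ≤ ξ) (hξ1 : ξ < 1) (hm0 : 0 ≤ m) (hm : m ≤ (1 - ξ) / 4) :
    3 / 4 ≤ 1 - m / 2 ∧ 1 - m / 2 ≤ 1 ∧ 0 ≤ (ξ + 1) / (1 - m / 2) - 1 ∧
    (1 - ξ) / 2 ≤ 1 - ((ξ + 1) / (1 - m / 2) - 1) ∧
    1 - ((ξ + 1) / (1 - m / 2) - 1) ≤ 1 - ξ := by
  have h1 : 3 / 4 ≤ 1 - m / 2 := by linarith
  have h2 : (0 : ℝ) < 1 - m / 2 := by linarith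
  have e : 1 - ((ξ + 1) / (1 - m / 2) - 1) = (1 - ξ - m) / (1 - m / 2) := by
    rw [eq_div_iff h2.ne']
    linear_combination -(div_mul_cancel₀ (ξ + 1) h2.ne')
  have e2 : ξ ≤ (ξ + 1) / (1 - m / 2) - 1 := by
    rw [le_sub_iff_add_le, le_div_iff₀ h2]; nlinarith
  refine ⟨h1, by linarith, by linarith, ?_, by linarith⟩
  rw [e, le_div_iff₀ h2]; nlinarith

set_option maxHeartbeats 2000000 in
lemma aux_pt (α β C0 : ℝ) (hα : 0 ≤ α) (hβ : 0 ≤ β) (hC0 : 0 < C0) (u : ℝ → ℝ) (n : ℕ)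
    (hn : 1 ≤ n) (ξ m s : ℝ) (hξ0 : 0 ≤ ξ) (hξ1 : ξ < 1) (hm0 : 0 ≤ m)
    (hmδ : m ≤ √(1 - ξ) / n) (hm : m ≤ (1 - ξ) / 4) (hs0 : 0 ≤ s) (hsm : s ≤ m)
    (hu : ∀ y, -1 ≤ y → y ≤ 1 → |u y| * (1 + ((y - ((ξ + 1) / (1 - m / 2) - 1)) /
        (√(1 - ((ξ + 1) / (1 - m / 2) - 1)) / n)) ^ 2) * (1 - ((ξ + 1) / (1 - m / 2) - 1)) ^ β ≤
        C0 * ((1 + y) ^ α * (1 - y) ^ β))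
    (x : ℝ) (hx0 : -1 ≤ x) (hx1 : x ≤ 1) :
    |(Icc (-1 : ℝ) (1 - m)).indicator (fun x => u ((x + 1) / (1 - m / 2) - 1)) (x - s)| *
      (1 + ((x - ξ) / (√(1 - ξ) / n)) ^ 2) * (1 - ξ) ^ β ≤
      3 * C0 * 2 ^ β * (4 / 3) ^ α * (4 / 3) ^ β * ((1 + x) ^ α * (1 - x) ^ β) := by
  obtain ⟨p1, p2, p3, p4, p5⟩ := aux_par ξ m hξ0 hξ1 hm0 hm
  set l := 1 - m / 2 with hl
  set ξ' := (ξ + 1) / l - 1 with hξ'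
  have hl0 : 0 < l := by linarith
  have hRHS : 0 ≤ 3 * C0 * 2 ^ β * (4 / 3) ^ α * (4 / 3) ^ β * ((1 + x) ^ α * (1 - x) ^ β) := by
    have : 0 ≤ (1 + x) ^ α := Real.rpow_nonneg (by linarith) _
    have : 0 ≤ (1 - x) ^ β := Real.rpow_nonneg (by linarith) _
    positivity
  by_cases hx : x - s ∈ Icc (-1 : ℝ) (1 - m)
  swap
  · rw [indicator_of_notMem hx]; simpa using hRHS
  rw [indicator_of_mem hx]
  set y := (x - s + 1) / l - 1 with hy
  have e1 : 1 + y = (1 + (x - s)) / l := by rw [hy]; field_simp; ring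
  have e2 : 1 - y = (1 - m - (x - s)) / l := by
    rw [eq_div_iff hl0.ne', hy]
    linear_combination -(div_mul_cancel₀ (x - s + 1) hl0.ne') + 2 * hl
  have a1 : 0 ≤ 1 + y := by rw [e1]; exact div_nonneg (by linarith [hx.1]) hl0.le
  have a2 : 0 ≤ 1 - y := by rw [e2]; exact div_nonneg (by linarith [hx.2]) hl0.le
  have b1 : 1 + y ≤ 4 / 3 * (1 + x) := by
    rw [e1, div_le_iff₀ hl0]; nlinarith [hx.1]
  have b2 : 1 - y ≤ 4 / 3 * (1 - x) := by
    rw [e2, div_le_iff₀ hl0]; nlinarith [hx.2]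
  have H := hu y (by linarith) (by linarith)
  have hn0 : (0 : ℝ) < n := by exact_mod_cast hn
  set δ := √(1 - ξ) / n with hδ
  set δ' := √(1 - ξ') / n with hδ'
  have hδ0 : 0 < δ := div_pos (Real.sqrt_pos.2 (by linarith)) hn0
  have hδ'0 : 0 < δ' := div_pos (Real.sqrt_pos.2 (by linarith)) hn0
  have hδδ : δ' ≤ δ := by rw [hδ, hδ']; gcongr
  have c1 : ((x - s - ξ) / δ) ^ 2 ≤ ((y - ξ') / δ') ^ 2 := by
    have : y - ξ' = (x - s - ξ) / l := by rw [hy, hξ']; field_simp; ring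
    rw [this, div_div, div_pow _ δ, div_pow _ (l * δ'), mul_pow]
    have : l ^ 2 * δ' ^ 2 ≤ δ ^ 2 := by
      rw [← mul_pow]; exact pow_le_pow_left₀ (by positivity) (by nlinarith) 2
    gcongr
  have c2 : 1 + ((x - ξ) / δ) ^ 2 ≤ 3 * (1 + ((y - ξ') / δ') ^ 2) := by
    have d1 : (x - ξ) / δ = (x - s - ξ) / δ + s / δ := by rw [← add_div]; ring_nf
    have d2 : s / δ ≤ 1 := by rw [div_le_one hδ0]; linarith
    have d3 : 0 ≤ s / δ := by positivity
    rw [d1]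
    nlinarith [sq_nonneg ((x - s - ξ) / δ - s / δ)]
  have c3 : (1 - ξ) ^ β ≤ 2 ^ β * (1 - ξ') ^ β := by
    rw [← Real.mul_rpow (by norm_num) (by linarith)]
    exact Real.rpow_le_rpow (by linarith) (by linarith) hβ
  have c4 : (1 + y) ^ α ≤ (4 / 3) ^ α * (1 + x) ^ α := by
    rw [← Real.mul_rpow (by norm_num) (by linarith)]
    exact Real.rpow_le_rpow a1 b1 hα
  have c5 : (1 - y) ^ β ≤ (4 / 3) ^ β * (1 - x) ^ β := by
    rw [← Real.mul_rpow (by norm_num) (by linarith)]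
    exact Real.rpow_le_rpow a2 b2 hβ
  have n1 : 0 ≤ (1 - ξ) ^ β := Real.rpow_nonneg (by linarith) _
  have n2 : 0 ≤ (1 - y) ^ β := Real.rpow_nonneg a2 _
  have n3 : 0 ≤ (1 + x) ^ α := Real.rpow_nonneg (by linarith) _
  calc |u y| * (1 + ((x - ξ) / δ) ^ 2) * (1 - ξ) ^ β
      ≤ |u y| * (3 * (1 + ((y - ξ') / δ') ^ 2)) * (2 ^ β * (1 - ξ') ^ β) := by gcongr
    _ = 3 * 2 ^ β * (|u y| * (1 + ((y - ξ') / δ') ^ 2) * (1 - ξ') ^ β) := by ring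
    _ ≤ 3 * 2 ^ β * (C0 * ((1 + y) ^ α * (1 - y) ^ β)) := by gcongr
    _ ≤ 3 * 2 ^ β * (C0 * (((4 / 3) ^ α * (1 + x) ^ α) * ((4 / 3) ^ β * (1 - x) ^ β))) := by
        gcongr
    _ = _ := by ring

/-- orthogonality after an affine change of variables -/
lemma aux_orth_aff (u : ℝ → ℝ) (n : ℕ)
    (hu : ∀ Q : Polynomial ℝ, Q.natDegree ≤ n → ∫ x in (-1 : ℝ)..1, Q.eval x * u x = 0)
    (m : ℝ) (hm0 : 0 ≤ m) (hm : m ≤ 1) (S : Polynomial ℝ) (hS : S.natDegree ≤ n) :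
    ∫ x in Icc (-1 : ℝ) (1 - m), S.eval x * u ((x + 1) / (1 - m / 2) - 1) = 0 := by
  have hl : (0 : ℝ) < 1 - m / 2 := by linarith
  rw [integral_Icc_eq_integral_Ioc, ← intervalIntegral.integral_of_le (by linarith)]
  set l := 1 - m / 2 with hl'
  let T : Polynomial ℝ := S.comp (Polynomial.C l * Polynomial.X + Polynomial.C (l - 1))
  have hT : T.natDegree ≤ n := by
    refine Polynomial.natDegree_comp_le.trans ?_
    have : (Polynomial.C l * Polynomial.X + Polynomial.C (l - 1)).natDegree ≤ 1 :=
      Polynomial.natDegree_linear_le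
    calc _ ≤ S.natDegree * 1 := Nat.mul_le_mul_left _ this
      _ ≤ n := by simpa using hS
  have h1 := hu T hT
  have h2 := intervalIntegral.integral_comp_div_add (a := -1) (b := 1 - m)
    (fun y => T.eval y * u y) hl.ne' (1 / l - 1)
  have h3 : (-1 : ℝ) / l + (1 / l - 1) = -1 := by ring
  have h4 : (1 - m) / l + (1 / l - 1) = 1 := by
    have : (1 - m) = 2 * l - 1 := by rw [hl']; ring
    rw [this]; have := hl.ne'; field_simp; ring
  rw [h3, h4, h1, smul_zero] at h2
  rw [← h2]
  refine intervalIntegral.integral_congr fun x _ => ?_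
  have e : x / l + (1 / l - 1) = (x + 1) / l - 1 := by ring
  simp only [T, Polynomial.eval_comp, e]
  have e2 : l * ((x + 1) / l - 1) + (l - 1) = x := by field_simp; ring
  simp [e2]

lemma aux_lower (u : ℝ → ℝ) (hc : Continuous u) (c0 ε : ℝ) (hc0 : 0 < c0) (n : ℕ) (hn : 1 ≤ n)
    (j : ℕ) (h : ℝ) (hh : 0 < h) (ξ m : ℝ) (hmh : m = (j + 1 : ℝ) * h) (hξ0 : 0 ≤ ξ) (hξ1 : ξ < 1)
    (hm : m ≤ (1 - ξ) / 4) (hmε : m ≤ ε * (√(1 - ξ) / n) / 4)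
    (hu : ∀ y, -1 ≤ y → y ≤ 1 → |y - ((ξ + 1) / (1 - m / 2) - 1)| ≤
        ε * √(1 - ((ξ + 1) / (1 - m / 2) - 1)) / n → c0 ≤ u y) :
    c0 * (j.factorial * h ^ (j + 1)) ≤
      ∫ x in Icc (-1 : ℝ) (1 - m), bsp h j (x - ξ) * u ((x + 1) / (1 - m / 2) - 1) := by
  have hm0 : 0 < m := by rw [hmh]; positivity
  obtain ⟨p1, p2, p3, p4, p5⟩ := aux_par ξ m hξ0 hξ1 hm0.le hm
  set l := 1 - m / 2 with hl
  set ξ' := (ξ + 1) / l - 1 with hξ'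
  have hl0 : 0 < l := by linarith
  have hn0 : (0 : ℝ) < n := by exact_mod_cast hn
  have hε : 0 < ε := by
    have : 0 < ε * (√(1 - ξ) / n) := by linarith
    exact pos_of_mul_pos_left this (by positivity)
  have hb : IntervalIntegrable (fun x => bsp h j (x - ξ)) volume (-1) (1 - m) := by
    have := (bsp_intervalIntegrable h j (-1 - ξ) (1 - m - ξ)).comp_sub_right ξ
    simpa using this
  have hvc : Continuous fun x : ℝ => u ((x + 1) / l - 1) := by fun_prop
  rw [integral_Icc_eq_integral_Ioc, ← intervalIntegral.integral_of_le (by linarith)]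
  have key : ∀ x, bsp h j (x - ξ) * c0 ≤ bsp h j (x - ξ) * u ((x + 1) / l - 1) := by
    intro x
    by_cases h1 : 0 ≤ x - ξ
    · rw [bsp_right h hh j _ h1]; simp
    by_cases h2 : x - ξ < -((j + 1 : ℝ) * h)
    · rw [bsp_left h hh j _ h2]; simp
    push Not at h1 h2
    rw [← hmh] at h2
    refine mul_le_mul_of_nonneg_left ?_ (bsp_nonneg h hh j _)
    refine hu _ ?_ ?_ ?_
    · have : 0 ≤ (x + 1) / l := div_nonneg (by linarith) hl0.le
      linarith
    · rw [sub_le_iff_le_add, div_le_iff₀ hl0]; linarith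
    · have e : (x + 1) / l - 1 - ξ' = (x - ξ) / l := by rw [hξ']; field_simp; ring
      rw [e, abs_div, abs_of_pos hl0, div_le_iff₀ hl0, abs_of_neg h1]
      have s1 : √(1 - ξ) / 2 ≤ √(1 - ξ') := by
        rw [show √(1 - ξ) / 2 = √((1 - ξ) / 4) by
          rw [Real.sqrt_div (by linarith), show (4 : ℝ) = 2 ^ 2 by norm_num,
            Real.sqrt_sq (by norm_num)]]
        exact Real.sqrt_le_sqrt (by linarith)
      have s2 : ε * (√(1 - ξ) / 2) / n ≤ ε * √(1 - ξ') / n := by gcongr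
      have s3 : 0 ≤ ε * (√(1 - ξ) / 2) / n := by positivity
      have s4 : ε * (√(1 - ξ) / n) / 4 = (ε * (√(1 - ξ) / 2) / n) / 2 := by ring
      nlinarith
  have i1 := intervalIntegral.integral_mono (by linarith) (hb.mul_const c0)
    (hb.mul_continuousOn hvc.continuousOn) key
  refine le_trans ?_ i1
  rw [intervalIntegral.integral_mul_const, mul_comm]
  refine mul_le_mul_of_nonneg_right ?_ hc0.le
  have i2 := intervalIntegral.integral_mono_interval (a := ξ - m) (b := ξ) (c := -1) (d := 1 - m)
    (μ := volume) (f := fun x => bsp h j (x - ξ)) (by linarith) (by linarith) (by linarith)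
    (ae_of_all _ fun x => bsp_nonneg h hh j _) hb
  refine le_trans (le_of_eq ?_) i2
  rw [intervalIntegral.integral_comp_sub_right (fun x => bsp h j x) ξ, sub_self, ← bsp_integral h hh j,
    show ξ - m - ξ = -((j + 1 : ℝ) * h) by rw [hmh]; ring]

lemma aux_swap (j : ℕ) (h ξ m : ℝ) (hh : 0 < h) (hmh : m = (j + 1 : ℝ) * h) (v : ℝ → ℝ)
    (hv : Continuous v) (n : ℕ)
    (horth : ∀ S : Polynomial ℝ, S.natDegree ≤ n → ∫ x in Icc (-1 : ℝ) (1 - m), S.eval x * v x = 0)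
    (P : Polynomial ℝ) (hP : P.natDegree ≤ n) :
    ∫ x in Icc (-1 : ℝ) 1, (tpw j (x - ξ) - P.eval x) *
      (∑ i ∈ Finset.range (j + 1 + 1), (((-1 : ℤ) ^ (j + 1 - i) * ((j + 1).choose i : ℤ) : ℤ) : ℝ) *
        (Icc (-1 : ℝ) (1 - m)).indicator v (x - i * h)) =
    ∫ x in Icc (-1 : ℝ) (1 - m), bsp h j (x - ξ) * v x := by
  set D : ℝ → ℝ := fun x => tpw j (x - ξ) - P.eval x with hD
  set a : ℕ → ℝ := fun i => (((-1 : ℤ) ^ (j + 1 - i) * ((j + 1).choose i : ℤ) : ℤ) : ℝ) with ha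
  have hmono : Monotone fun x => tpw j (x - ξ) := fun x y hxy => tpw_mono j (by linarith)
  have hDl : LocallyIntegrable D volume :=
    hmono.locallyIntegrable.sub (P.continuous.locallyIntegrable)
  have hi0 : ∀ i ∈ Finset.range (j + 1 + 1), (i : ℝ) * h ≤ 1 - (1 - m) := by
    intro i hi
    have : (i : ℝ) ≤ j + 1 := by exact_mod_cast Nat.lt_succ_iff.1 (Finset.mem_range.1 hi)
    rw [hmh]; nlinarith
  have e1 : ∫ x in Icc (-1 : ℝ) 1, D x * (∑ i ∈ Finset.range (j + 1 + 1), a i *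
      (Icc (-1 : ℝ) (1 - m)).indicator v (x - i * h)) =
      ∑ i ∈ Finset.range (j + 1 + 1), a i * ∫ x in Icc (-1 : ℝ) (1 - m), D (x + i * h) * v x := by
    have : ∀ x, D x * (∑ i ∈ Finset.range (j + 1 + 1), a i *
      (Icc (-1 : ℝ) (1 - m)).indicator v (x - i * h)) = ∑ i ∈ Finset.range (j + 1 + 1), a i *
      (D x * (Icc (-1 : ℝ) (1 - m)).indicator v (x - i * h)) := by
      intro x; rw [Finset.mul_sum]; exact Finset.sum_congr rfl fun i _ => by ring
    simp_rw [this]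
    rw [integral_finsetSum]
    · refine Finset.sum_congr rfl fun i hi => ?_
      rw [integral_const_mul, aux_shift D v _ _ (by positivity) (hi0 i hi)]
    · intro i hi
      exact (aux_shift_int2 D v hv hDl _ _ (by positivity) (hi0 i hi)).const_mul _
  rw [e1]
  set S : Polynomial ℝ := ∑ i ∈ Finset.range (j + 1 + 1), Polynomial.C (a i) *
    P.comp (Polynomial.X + Polynomial.C (i * h)) with hS
  have hSd : S.natDegree ≤ n := by
    refine Polynomial.natDegree_sum_le_of_forall_le _ _ fun i _ => ?_
    refine (Polynomial.natDegree_C_mul_le _ _).trans ?_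
    refine Polynomial.natDegree_comp_le.trans ?_
    rw [Polynomial.natDegree_X_add_C, mul_one]; exact hP
  have hSe : ∀ x, S.eval x = ∑ i ∈ Finset.range (j + 1 + 1), a i * P.eval (x + i * h) := by
    intro x; simp [hS, Polynomial.eval_finset_sum, Polynomial.eval_comp]
  have hBe : ∀ x, bsp h j (x - ξ) = ∑ i ∈ Finset.range (j + 1 + 1), a i * tpw j (x + i * h - ξ) := by
    intro x
    rw [bsp, fwdDiff_iter_eq_sum_shift]
    refine Finset.sum_congr rfl fun i _ => ?_
    rw [zsmul_eq_mul, nsmul_eq_mul]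
    simp only [ha]
    congr 2; ring
  have hsum : ∀ x, (∑ i ∈ Finset.range (j + 1 + 1), a i * (D (x + i * h) * v x)) =
      bsp h j (x - ξ) * v x - S.eval x * v x := by
    intro x
    rw [hSe, hBe, ← sub_mul, ← Finset.sum_sub_distrib, Finset.sum_mul]
    refine Finset.sum_congr rfl fun i _ => ?_
    simp only [hD]; ring
  have hint : ∀ i ∈ Finset.range (j + 1 + 1),
      IntegrableOn (fun x => a i * (D (x + i * h) * v x)) (Icc (-1 : ℝ) (1 - m)) := fun i _ =>
    (aux_shift_int D v hv hDl _ _).const_mul _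
  have hSi : IntegrableOn (fun x => S.eval x * v x) (Icc (-1 : ℝ) (1 - m)) :=
    (S.continuous.mul hv).continuousOn.integrableOn_compact isCompact_Icc
  have hsi : IntegrableOn (fun x => bsp h j (x - ξ) * v x - S.eval x * v x)
      (Icc (-1 : ℝ) (1 - m)) := by
    have := integrable_finsetSum _ hint
    refine Integrable.congr this (ae_of_all _ fun x => ?_)
    exact hsum x
  have hBi : IntegrableOn (fun x => bsp h j (x - ξ) * v x) (Icc (-1 : ℝ) (1 - m)) := by
    refine Integrable.congr (hsi.add hSi) (ae_of_all _ fun x => ?_)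
    simp
  calc _ = ∑ i ∈ Finset.range (j + 1 + 1), ∫ x in Icc (-1 : ℝ) (1 - m), a i * (D (x + i * h) * v x) :=
        Finset.sum_congr rfl fun i _ => (integral_const_mul _ _).symm
    _ = ∫ x in Icc (-1 : ℝ) (1 - m), (bsp h j (x - ξ) * v x - S.eval x * v x) := by
        rw [← integral_finsetSum _ hint]
        simp_rw [hsum]
    _ = _ := by
        rw [integral_sub hBi hSi, horth S hSd, sub_zero]

set_option maxHeartbeats 2000000 in
lemma aux_test (j : ℕ) (α β : ℝ) (hα : 0 ≤ α) (hβ : 0 ≤ β) :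
    ∃ C > (0 : ℝ), ∃ c > (0 : ℝ), ∀ n : ℕ, 2 * (j + 1) ≤ n → ∀ ξ : ℝ, 0 ≤ ξ →
      ξ ≤ 1 - 2 * ((j + 1 : ℕ) : ℝ) ^ 2 / (n : ℝ) ^ 2 → ∃ g : ℝ → ℝ,
      (∀ x, -1 ≤ x → x ≤ 1 → |g x| * (1 + ((x - ξ) / (√(1 - ξ) / n)) ^ 2) * (1 - ξ) ^ β ≤
        C * jacobi α β x) ∧
      ∀ P : Polynomial ℝ, P.natDegree ≤ n → c * (√(1 - ξ) / n) ^ (j + 1) ≤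
        ∫ x in Icc (-1 : ℝ) 1, (tpw j (x - ξ) - P.eval x) * g x := by
  obtain ⟨C0, hC0, c0, hc0, ε, hε, hK⟩ := aux_kernel α β hα hβ
  set a : ℕ → ℝ := fun i => (((-1 : ℤ) ^ (j + 1 - i) * ((j + 1).choose i : ℤ) : ℤ) : ℝ) with ha
  set C1 : ℝ := 3 * C0 * 2 ^ β * (4 / 3) ^ α * (4 / 3) ^ β with hC1
  have hC1p : 0 < C1 := by positivity
  set A : ℝ := ∑ i ∈ Finset.range (j + 1 + 1), |a i| with hA
  have hA0 : 0 ≤ A := Finset.sum_nonneg fun i _ => abs_nonneg _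
  set ε1 : ℝ := min ε 1 / (4 * (j + 1)) with hε1
  have hε1p : 0 < ε1 := by
    have : 0 < min ε 1 := lt_min hε one_pos
    positivity
  refine ⟨(A + 1) * C1, by positivity, c0 * (j.factorial * ε1 ^ (j + 1)), by positivity, ?_⟩
  intro n hn ξ hξ0 hξ1
  have hn1 : 1 ≤ n := by omega
  have hn0 : (0 : ℝ) < n := by exact_mod_cast hn1
  have hk2 : (2 : ℝ) / (n : ℝ) ^ 2 ≤ 2 * ((j + 1 : ℕ) : ℝ) ^ 2 / (n : ℝ) ^ 2 := by
    have : (1 : ℝ) ≤ ((j + 1 : ℕ) : ℝ) := by exact_mod_cast Nat.succ_le_succ (Nat.zero_le j)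
    gcongr
    nlinarith
  have hξn : 2 / (n : ℝ) ^ 2 ≤ 1 - ξ := by linarith
  have hq0 : (0 : ℝ) < 1 / (n : ℝ) ^ 2 := by positivity
  have h21 : 2 / (n : ℝ) ^ 2 = 2 * (1 / (n : ℝ) ^ 2) := by ring
  have hξ1' : ξ < 1 := by linarith
  set δ : ℝ := √(1 - ξ) / n with hδ
  have hs0 : 0 < √(1 - ξ) := Real.sqrt_pos.2 (by linarith)
  have hδ0 : 0 < δ := div_pos hs0 hn0
  have hδξ : δ ≤ 1 - ξ := by
    have h1 : 1 / (n : ℝ) ≤ √(1 - ξ) := by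
      refine Real.le_sqrt_of_sq_le ?_
      rw [div_pow, one_pow]; linarith
    calc δ = √(1 - ξ) * (1 / n) := by rw [hδ]; ring
      _ ≤ √(1 - ξ) * √(1 - ξ) := by gcongr
      _ = 1 - ξ := Real.mul_self_sqrt (by linarith)
  set h : ℝ := ε1 * δ with hh
  have hhp : 0 < h := by positivity
  set m : ℝ := (j + 1 : ℝ) * h with hm
  have hme : m = min ε 1 * δ / 4 := by
    rw [hm, hh, hε1]; field_simp
  have hm1 : m ≤ δ / 4 := by
    rw [hme]; have := min_le_right ε 1; gcongr; nlinarith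
  have hm2 : m ≤ ε * δ / 4 := by
    rw [hme]; gcongr; exact min_le_left _ _
  have hmp : 0 < m := by positivity
  have hm3 : m ≤ (1 - ξ) / 4 := by linarith
  obtain ⟨p1, p2, p3, p4, p5⟩ := aux_par ξ m hξ0 hξ1' hmp.le hm3
  obtain ⟨u, huc, huo, hub, hul⟩ := hK n hn1 ((ξ + 1) / (1 - m / 2) - 1) p3 (by linarith)
  set v : ℝ → ℝ := fun x => u ((x + 1) / (1 - m / 2) - 1) with hv
  have hvc : Continuous v := by rw [hv]; fun_prop
  refine ⟨fun x => ∑ i ∈ Finset.range (j + 1 + 1), a i *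
        (Icc (-1 : ℝ) (1 - m)).indicator v (x - i * h), ?_, ?_⟩
  · intro x hx0 hx1
    have hpt : ∀ i ∈ Finset.range (j + 1 + 1),
        |(Icc (-1 : ℝ) (1 - m)).indicator v (x - i * h)| * (1 + ((x - ξ) / δ) ^ 2) * (1 - ξ) ^ β ≤
        C1 * ((1 + x) ^ α * (1 - x) ^ β) := by
      intro i hi
      have hij : (i : ℝ) ≤ j + 1 := by exact_mod_cast Nat.lt_succ_iff.1 (Finset.mem_range.1 hi)
      exact aux_pt α β C0 hα hβ hC0 u n hn1 ξ m (i * h) hξ0 hξ1' hmp.le (by linarith) hm3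
        (by positivity) (by rw [hm]; gcongr) hub x hx0 hx1
    have hw0 : 0 ≤ (1 + x) ^ α * (1 - x) ^ β :=
      mul_nonneg (Real.rpow_nonneg (by linarith) _) (Real.rpow_nonneg (by linarith) _)
    have hβ0 : 0 ≤ (1 - ξ) ^ β := Real.rpow_nonneg (by linarith) _
    calc |∑ i ∈ Finset.range (j + 1 + 1), a i * (Icc (-1 : ℝ) (1 - m)).indicator v (x - i * h)| *
          (1 + ((x - ξ) / δ) ^ 2) * (1 - ξ) ^ β
        ≤ (∑ i ∈ Finset.range (j + 1 + 1), |a i * (Icc (-1 : ℝ) (1 - m)).indicator v (x - i * h)|) *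
          (1 + ((x - ξ) / δ) ^ 2) * (1 - ξ) ^ β := by
          gcongr; exact Finset.abs_sum_le_sum_abs _ _
      _ = ∑ i ∈ Finset.range (j + 1 + 1), |a i| *
          (|(Icc (-1 : ℝ) (1 - m)).indicator v (x - i * h)| * (1 + ((x - ξ) / δ) ^ 2) *
            (1 - ξ) ^ β) := by
          rw [Finset.sum_mul, Finset.sum_mul]
          exact Finset.sum_congr rfl fun i _ => by rw [abs_mul]; ring
      _ ≤ ∑ i ∈ Finset.range (j + 1 + 1), |a i| * (C1 * ((1 + x) ^ α * (1 - x) ^ β)) :=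
          Finset.sum_le_sum fun i hi => mul_le_mul_of_nonneg_left (hpt i hi) (abs_nonneg _)
      _ = A * (C1 * ((1 + x) ^ α * (1 - x) ^ β)) := by rw [hA, Finset.sum_mul]
      _ ≤ (A + 1) * (C1 * ((1 + x) ^ α * (1 - x) ^ β)) := by gcongr; linarith
      _ = _ := by rw [jacobi]; ring
  · intro P hP
    rw [aux_swap j h ξ m hhp hm v hvc n (fun S hS =>
      aux_orth_aff u n huo m hmp.le (by linarith) S hS) P hP]
    have := aux_lower u huc c0 ε hc0 n hn1 j h hhp ξ m hm hξ0 hξ1' hm3 hm2 hul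
    refine le_trans (le_of_eq ?_) this
    rw [hh, mul_pow]; ring

theorem statement18 (q : ℝ≥0∞) (hq : 1 ≤ q) (k : ℕ) (hk : 1 ≤ k) (α β : ℝ)
    (hα : 0 ≤ α) (hβ : 0 ≤ β) :
    ∃ c > (0 : ℝ), ∀ n : ℕ, 2 * k ≤ n → ∀ ξ : ℝ, 0 ≤ ξ →
      ξ ≤ 1 - 2 * (k : ℝ) ^ 2 / (n : ℝ) ^ 2 →
      ENNReal.ofReal (c * (n : ℝ) ^ (-(k : ℝ) + 1 - 1 / q.toReal) *
          (1 - ξ) ^ (β + ((k : ℝ) - 1) / 2 + 1 / (2 * q.toReal))) ≤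
        En n (fun x => if ξ ≤ x then (x - ξ) ^ (k - 1) else 0) (jacobi α β) q := by
  obtain ⟨j, rfl⟩ : ∃ j, k = j + 1 := ⟨k - 1, by omega⟩
  obtain ⟨C, hC, c, hc, H⟩ := aux_test j α β hα hβ
  set r : ℝ := 1 / q.toReal with hr
  refine ⟨c / (C * Real.pi ^ (1 - r)), by have := Real.pi_pos; positivity, ?_⟩
  intro n hn ξ hξ0 hξ1
  have hn0 : (0 : ℝ) < n := by
    have : 0 < n := by omega
    exact_mod_cast this
  have hξ : 0 < 1 - ξ := by
    have : 0 < 2 * ((j + 1 : ℕ) : ℝ) ^ 2 / (n : ℝ) ^ 2 := by positivity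
    linarith
  obtain ⟨g, hg1, hg2⟩ := H n hn ξ hξ0 hξ1
  set δ : ℝ := √(1 - ξ) / n with hδ
  have hs0 : 0 < √(1 - ξ) := Real.sqrt_pos.2 hξ
  have hδ0 : 0 < δ := div_pos hs0 hn0
  have hexp : 0 ≤ 1 - r := by
    rw [hr]
    rcases eq_or_ne q ∞ with rfl | hqt
    · simp
    · have : 1 ≤ q.toReal := by
        have := ENNReal.toReal_mono hqt hq
        simpa using this
      rw [sub_nonneg, div_le_one (by linarith)]; exact this
  unfold En
  refine le_iInf₂ fun P hP => ?_
  have hb0 : 0 < (1 - ξ) ^ β := Real.rpow_pos_of_pos hξ _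
  have hfe : (fun x => jacobi α β x * ((fun x => if ξ ≤ x then (x - ξ) ^ (j + 1 - 1) else 0) x -
      P.eval x)) = fun x => jacobi α β x * (tpw j (x - ξ) - P.eval x) := by
    ext x
    simp only [tpw, sub_nonneg, Nat.add_sub_cancel]
  rw [hfe]
  have hold := aux_holder q hq ξ δ (C / (1 - ξ) ^ β) hδ0 (by positivity)
    (fun x => tpw j (x - ξ) - P.eval x) g (jacobi α β)
    (((tpw_measurable j).comp (measurable_id.sub_const ξ)).sub P.continuous.measurable)
    (jacobi_measurable α β) (fun x hx0 hx1 => by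
      have := hg1 x hx0 hx1
      rw [div_mul_eq_mul_div, le_div_iff₀ hb0]; exact this)
  set E := LpOn (fun x => jacobi α β x * (tpw j (x - ξ) - P.eval x)) q (-1) 1 with hE
  have h1 := (ENNReal.ofReal_le_ofReal (hg2 P hP)).trans hold
  have hpd : 0 < Real.pi * δ := mul_pos Real.pi_pos hδ0
  rw [ENNReal.ofReal_rpow_of_pos hpd, mul_comm E, ← mul_assoc,
    ← ENNReal.ofReal_mul (by positivity)] at h1
  have hB : 0 < C / (1 - ξ) ^ β * (Real.pi * δ) ^ (1 - r) := by positivity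
  have h2 : ENNReal.ofReal (c * δ ^ (j + 1) / (C / (1 - ξ) ^ β * (Real.pi * δ) ^ (1 - r))) ≤ E := by
    rw [ENNReal.ofReal_div_of_pos hB]
    refine ENNReal.div_le_of_le_mul ?_
    rw [mul_comm E]; exact h1
  refine le_trans (le_of_eq ?_) h2
  congr 1
  have e1 : δ ^ (j + 1) = δ ^ ((j : ℝ) + r) * δ ^ (1 - r) := by
    rw [← Real.rpow_add hδ0, ← Real.rpow_natCast]; congr 1; push_cast; ring
  have e2 : (Real.pi * δ) ^ (1 - r) = Real.pi ^ (1 - r) * δ ^ (1 - r) :=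
    Real.mul_rpow Real.pi_pos.le hδ0.le
  have e3 : δ ^ ((j : ℝ) + r) = (1 - ξ) ^ (((j : ℝ) + r) / 2) * (n : ℝ) ^ (-((j : ℝ) + r)) := by
    rw [hδ, Real.div_rpow hs0.le hn0.le, Real.rpow_neg hn0.le, div_eq_mul_inv, Real.sqrt_eq_rpow,
      ← Real.rpow_mul hξ.le]
    congr 2; ring
  have e4 : (1 - ξ) ^ (β + (((j + 1 : ℕ) : ℝ) - 1) / 2 + 1 / (2 * q.toReal)) =
      (1 - ξ) ^ β * (1 - ξ) ^ (((j : ℝ) + r) / 2) := by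
    rw [← Real.rpow_add hξ]; congr 1; rw [hr, one_div, one_div, mul_inv]; push_cast; ring
  have e5 : (-((j + 1 : ℕ) : ℝ) + 1 - r) = -((j : ℝ) + r) := by push_cast; ring
  have hd : 0 < δ ^ (1 - r) := by positivity
  have hp : 0 < Real.pi ^ (1 - r) := Real.rpow_pos_of_pos Real.pi_pos _
  rw [e1, e2, e3, e4, e5]
  field_simp
end
end

section
/- Let 1 ≤ p ≤ ∞, r ∈ ℕ₀, α, β ∈ ℝ, and let f ∈ W_{p,r+1}^{α,β}. Then for any γ < 1 such that α − γ ∈ J_p and β − γ ∈ J_p, one has f ∈ W_{p,r}^{α−γ, β−γ}. Moreover, if in addition f^{(r)}(0) = 0, then there is a constant c > 0, depending only on p, α, β, γ, such that ‖w_{α−γ, β−γ}·f^{(r)}‖_p ≤ c·‖w_{α,β}·f^{(r+1)}‖_p. -/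
open MeasureTheory Set Filter
open scoped ENNReal

noncomputable section

/-- Membership in `W_{p,r}^{α,β}`: for `r ≥ 1`, the derivatives up to order `r-1` are
(locally) absolutely continuous on `(-1,1)`, expressed via the fundamental theorem of
calculus with locally integrable derivatives, and `‖w_{α,β} f^{(r)}‖_p < ∞`. -/
def MemWpr (p : ℝ≥0∞) (r : ℕ) (α β : ℝ) (f : ℝ → ℝ) : Prop :=
  Measurable f ∧
  (∀ j, j ≤ r → ∀ a b : ℝ, a ∈ Ioo (-1 : ℝ) 1 → b ∈ Ioo (-1 : ℝ) 1 →
    IntervalIntegrable (iteratedDeriv j f) volume a b) ∧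
  (∀ j, j < r → ∀ x ∈ Ioo (-1 : ℝ) 1,
    iteratedDeriv j f x = iteratedDeriv j f 0 + ∫ t in (0 : ℝ)..x, iteratedDeriv (j + 1) f t) ∧
  LpOn (fun x => jacobi α β x * iteratedDeriv r f x) p (-1) 1 ≠ ⊤


theorem aux_jensen {X : Type*} [MeasurableSpace X] (μ : Measure X) (w k : X → ℝ≥0∞)
    (hw : Measurable w) (hk : Measurable k) (P : ℝ) (hP : 1 ≤ P) :
    (∫⁻ x, w x * k x ∂μ) ^ P ≤ (∫⁻ x, w x ∂μ) ^ (P - 1) * ∫⁻ x, w x * k x ^ P ∂μ := by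
  have h := eLpNorm'_le_eLpNorm'_mul_rpow_measure_univ (μ := μ.withDensity w) (p := 1) (q := P)
    one_pos hP (f := k) hk.aestronglyMeasurable
  have hP0 : 0 < P := by linarith
  simp only [eLpNorm'_eq_lintegral_enorm, enorm_eq_self, ENNReal.rpow_one, div_one] at h
  rw [withDensity_apply _ MeasurableSet.univ, setLIntegral_univ,
    lintegral_withDensity_eq_lintegral_mul _ hw hk,
    lintegral_withDensity_eq_lintegral_mul _ hw (hk.pow_const P)] at h
  have h2 := ENNReal.rpow_le_rpow h hP0.le
  rw [ENNReal.mul_rpow_of_nonneg _ _ hP0.le, ← ENNReal.rpow_mul, ← ENNReal.rpow_mul,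
    one_div_mul_cancel hP0.ne', ENNReal.rpow_one, sub_mul, one_div_mul_cancel hP0.ne', one_mul]
    at h2
  rw [mul_comm (_ ^ (P - 1))]
  simpa only [Pi.mul_apply] using h2

theorem aux_I1 (s : ℝ) (hs : 1 < s) (u : ℝ) (hu : 0 < u) :
    ∫⁻ v in Ioo u 1, ENNReal.ofReal v ^ (-s) ≤
      ENNReal.ofReal (1 / (s - 1)) * ENNReal.ofReal u ^ (1 - s) := by
  have h1 : ∫⁻ v in Ioo u 1, ENNReal.ofReal v ^ (-s) ≤ ∫⁻ v in Ioi u, ENNReal.ofReal (v ^ (-s)) := by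
    refine (lintegral_mono_set Ioo_subset_Ioi_self).trans (le_of_eq ?_)
    refine setLIntegral_congr_fun measurableSet_Ioi fun v hv => ?_
    exact ENNReal.ofReal_rpow_of_pos (hu.trans hv)
  refine h1.trans ?_
  rw [← ofReal_integral_eq_lintegral_ofReal (integrableOn_Ioi_rpow_of_lt (by linarith) hu),
    integral_Ioi_rpow_of_lt (by linarith) hu, ENNReal.ofReal_rpow_of_pos hu,
    ← ENNReal.ofReal_mul (by have : 0 < s - 1 := by linarith
                             positivity)]
  · apply le_of_eq; congr 1
    have : s - 1 ≠ 0 := by linarith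
    have h3 : -s + 1 ≠ 0 := by intro h; apply this; linarith
    rw [show -s + 1 = 1 - s by ring] at *
    field_simp
    ring
  · filter_upwards [ae_restrict_mem measurableSet_Ioi] with v hv
    exact Real.rpow_nonneg (hu.trans hv).le _

theorem aux_I2 (e : ℝ) (he : -1 < e) (v : ℝ) (hv : 0 < v) :
    ∫⁻ u in Ioo 0 v, ENNReal.ofReal u ^ e =
      ENNReal.ofReal (1 / (e + 1)) * ENNReal.ofReal v ^ (e + 1) := by
  have h1 : ∫⁻ u in Ioo 0 v, ENNReal.ofReal u ^ e = ∫⁻ u in Ioo 0 v, ENNReal.ofReal (u ^ e) := by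
    refine setLIntegral_congr_fun measurableSet_Ioo fun u hu => ?_
    exact ENNReal.ofReal_rpow_of_pos hu.1
  have h2 := intervalIntegral.intervalIntegrable_rpow' (a := 0) (b := v) he
  rw [intervalIntegrable_iff_integrableOn_Ioo_of_le hv.le] at h2
  rw [h1, ← ofReal_integral_eq_lintegral_ofReal h2, ← integral_Ioc_eq_integral_Ioo,
    ← intervalIntegral.integral_of_le hv.le, integral_rpow (Or.inl he),
    ENNReal.ofReal_rpow_of_pos hv, ← ENNReal.ofReal_mul (by have : 0 < e + 1 := by linarith
                                                            positivity)]
  · congr 1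
    rw [Real.zero_rpow (by linarith)]; ring
  · filter_upwards [ae_restrict_mem measurableSet_Ioo] with u hu
    exact Real.rpow_nonneg hu.1.le _

theorem aux_tonelli (F : ℝ → ℝ → ℝ≥0∞) (hF : Measurable (Function.uncurry F)) :
    ∫⁻ u in Ioo (0:ℝ) 1, ∫⁻ v in Ioo u 1, F u v = ∫⁻ v in Ioo (0:ℝ) 1, ∫⁻ u in Ioo 0 v, F u v := by
  have hS : MeasurableSet {q : ℝ × ℝ | 0 < q.1 ∧ q.1 < q.2 ∧ q.2 < 1} := by
    refine ((measurableSet_lt measurable_const measurable_fst).inter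
      ((measurableSet_lt measurable_fst measurable_snd).inter
      (measurableSet_lt measurable_snd measurable_const)))
  set S := {q : ℝ × ℝ | 0 < q.1 ∧ q.1 < q.2 ∧ q.2 < 1}
  have hm := hF.indicator hS
  have := lintegral_lintegral_swap (μ := (volume : Measure ℝ)) (ν := (volume : Measure ℝ))
    (f := fun u v => S.indicator (Function.uncurry F) (u, v)) hm.aemeasurable
  have e1 : ∀ u, ∫⁻ v, S.indicator (Function.uncurry F) (u, v) =
      (Ioo (0:ℝ) 1).indicator (fun u => ∫⁻ v in Ioo u 1, F u v) u := by
    intro u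
    by_cases hu : u ∈ Ioo (0:ℝ) 1
    · rw [indicator_of_mem hu, ← lintegral_indicator measurableSet_Ioo]
      congr 1; ext v
      simp only [indicator, S, mem_ofPred_eq, mem_Ioo, Function.uncurry, hu.1, true_and]
    · rw [indicator_of_notMem hu, lintegral_eq_zero_of_ae_eq_zero]
      refine Eventually.of_forall fun v => ?_
      refine indicator_of_notMem (fun h => hu ⟨h.1, h.2.1.trans h.2.2⟩) _
  have e2 : ∀ v, ∫⁻ u, S.indicator (Function.uncurry F) (u, v) =
      (Ioo (0:ℝ) 1).indicator (fun v => ∫⁻ u in Ioo 0 v, F u v) v := by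
    intro v
    by_cases hu : v ∈ Ioo (0:ℝ) 1
    · rw [indicator_of_mem hu, ← lintegral_indicator measurableSet_Ioo]
      congr 1; ext v
      simp only [indicator, S, mem_ofPred_eq, mem_Ioo, Function.uncurry, hu.2, and_true]
    · rw [indicator_of_notMem hu, lintegral_eq_zero_of_ae_eq_zero]
      refine Eventually.of_forall fun u => ?_
      refine indicator_of_notMem (fun h => hu ⟨h.1.trans h.2.1, h.2.2⟩) _
  simp only [e1, e2] at this
  rwa [lintegral_indicator measurableSet_Ioo, lintegral_indicator measurableSet_Ioo] at this

theorem aux_hardy (P a γ : ℝ) (hP : 1 ≤ P) (hγ : γ < 1) (ha : -1 < a * P) :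
    ∃ C : ℝ≥0∞, C ≠ ⊤ ∧ ∀ G : ℝ → ℝ≥0∞, Measurable G →
      ∫⁻ u in Ioo (0:ℝ) 1, (ENNReal.ofReal u ^ a * ∫⁻ v in Ioo u 1, G v) ^ P ≤
      C * ∫⁻ v in Ioo (0:ℝ) 1, (ENNReal.ofReal v ^ (a + γ) * G v) ^ P := by
  have hP0 : 0 < P := by linarith
  obtain ⟨s, hs1, hs2⟩ : ∃ s, 1 < s ∧ -1 < a * P + (1 - s) * (P - 1) := by
    refine ⟨1 + (a * P + 1) / (2 * P), ?_, ?_⟩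
    · have : 0 < (a * P + 1) / (2 * P) := div_pos (by linarith) (by linarith)
      linarith
    · have h : (a * P + 1) / (2 * P) * (P - 1) < a * P + 1 := by
        rw [div_mul_eq_mul_div, div_lt_iff₀ (by linarith)]
        nlinarith
      linarith
  set e := a * P + (1 - s) * (P - 1) with he
  refine ⟨ENNReal.ofReal (1 / (s - 1)) ^ (P - 1) * ENNReal.ofReal (1 / (e + 1)), ?_, ?_⟩
  · exact ENNReal.mul_ne_top (ENNReal.rpow_ne_top_of_nonneg (by linarith) ENNReal.ofReal_ne_top)
      ENNReal.ofReal_ne_top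
  intro G hG
  have hpw : ∀ t : ℝ, Measurable fun v : ℝ => ENNReal.ofReal v ^ t := fun t =>
    ENNReal.measurable_ofReal.pow_const t
  set c1 := ENNReal.ofReal (1 / (s - 1)) ^ (P - 1)
  set c2 := ENNReal.ofReal (1 / (e + 1))
  have hc1 : c1 ≠ ⊤ := ENNReal.rpow_ne_top_of_nonneg (by linarith) ENNReal.ofReal_ne_top
  set k : ℝ → ℝ≥0∞ := fun v => ENNReal.ofReal v ^ (-s) * (ENNReal.ofReal v ^ s * G v) ^ P with hk
  have hkm : Measurable k := (hpw _).mul (((hpw _).mul hG).pow_const _)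
  have step : ∀ u ∈ Ioo (0:ℝ) 1, (ENNReal.ofReal u ^ a * ∫⁻ v in Ioo u 1, G v) ^ P ≤
      c1 * ∫⁻ v in Ioo u 1, ENNReal.ofReal u ^ e * k v := by
    intro u hu
    have hU0 : ENNReal.ofReal u ≠ 0 := by simpa using hu.1
    have hG1 : ∫⁻ v in Ioo u 1, G v =
        ∫⁻ v in Ioo u 1, ENNReal.ofReal v ^ (-s) * (ENNReal.ofReal v ^ s * G v) := by
      refine setLIntegral_congr_fun measurableSet_Ioo fun v hv => ?_
      have hV0 : ENNReal.ofReal v ≠ 0 := by simpa using hu.1.trans hv.1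
      rw [← mul_assoc, ← ENNReal.rpow_add _ _ hV0 ENNReal.ofReal_ne_top]
      simp
    have hj := aux_jensen (volume.restrict (Ioo u 1)) _ _ (hpw (-s)) ((hpw s).mul hG) P hP
    rw [ENNReal.mul_rpow_of_nonneg _ _ hP0.le, hG1]
    calc _ ≤ (ENNReal.ofReal u ^ a) ^ P * ((ENNReal.ofReal (1 / (s - 1)) * ENNReal.ofReal u ^ (1 - s)) ^ (P - 1) * ∫⁻ v in Ioo u 1, k v) := by
          refine mul_le_mul_right (hj.trans ?_) _
          exact mul_le_mul_left (ENNReal.rpow_le_rpow (aux_I1 s hs1 u hu.1) (by linarith)) _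
      _ = _ := by
          rw [lintegral_const_mul _ hkm, ENNReal.mul_rpow_of_nonneg _ _ (by linarith),
            ← ENNReal.rpow_mul, ← ENNReal.rpow_mul, he, ENNReal.rpow_add _ _ hU0 ENNReal.ofReal_ne_top]
          ring
  calc _ ≤ ∫⁻ u in Ioo (0:ℝ) 1, c1 * ∫⁻ v in Ioo u 1, ENNReal.ofReal u ^ e * k v :=
        setLIntegral_mono' measurableSet_Ioo step
    _ = c1 * ∫⁻ v in Ioo (0:ℝ) 1, ∫⁻ u in Ioo 0 v, ENNReal.ofReal u ^ e * k v := by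
        rw [lintegral_const_mul' _ _ hc1, aux_tonelli]
        exact ((hpw e).comp measurable_fst).mul (hkm.comp measurable_snd)
    _ ≤ c1 * ∫⁻ v in Ioo (0:ℝ) 1, c2 * (ENNReal.ofReal v ^ (a + γ) * G v) ^ P := by
        refine mul_le_mul_right (setLIntegral_mono' measurableSet_Ioo fun v hv => ?_) _
        have hV0 : ENNReal.ofReal v ≠ 0 := by simpa using hv.1
        have hV1 : ENNReal.ofReal v ≤ 1 := by simpa using hv.2.le
        rw [lintegral_mul_const _ (hpw e), aux_I2 e hs2 v hv.1, mul_assoc]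
        refine mul_le_mul_right ?_ _
        rw [hk]
        simp only
        rw [ENNReal.mul_rpow_of_nonneg _ _ hP0.le, ENNReal.mul_rpow_of_nonneg _ _ hP0.le,
          ← mul_assoc, ← mul_assoc]
        refine mul_le_mul_left ?_ _
        rw [← ENNReal.rpow_mul, ← ENNReal.rpow_mul, ← ENNReal.rpow_add _ _ hV0 ENNReal.ofReal_ne_top,
          ← ENNReal.rpow_add _ _ hV0 ENNReal.ofReal_ne_top]
        refine ENNReal.rpow_le_rpow_of_exponent_ge hV1 ?_
        rw [he]
        nlinarith
    _ = _ := by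
        rw [lintegral_const_mul, mul_assoc]
        exact ((hpw _).mul hG).pow_const _

theorem aux_enorm (a u y : ℝ) (hu : 0 < u) : ‖u ^ a * y‖ₑ = ENNReal.ofReal u ^ a * ‖y‖ₑ := by
  rw [enorm_mul, Real.enorm_eq_ofReal (Real.rpow_nonneg hu.le _), ENNReal.ofReal_rpow_of_pos hu]

theorem aux_core (p : ℝ≥0∞) (hp : 1 ≤ p) (a γ : ℝ) (hγ : γ < 1) (ha : a ∈ Jset p) :
    ∃ C : ℝ≥0∞, C ≠ ⊤ ∧ ∀ G Φ : ℝ → ℝ, Measurable G →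
      (∀ u ∈ Ioo (0:ℝ) 1, ‖Φ u‖ₑ ≤ ∫⁻ v in Ioo u 1, ‖G v‖ₑ) →
      eLpNorm (fun u => u ^ a * Φ u) p (volume.restrict (Ioo 0 1)) ≤
      C * eLpNorm (fun u => u ^ (a + γ) * G u) p (volume.restrict (Ioo 0 1)) := by
  by_cases hpt : p = ⊤
  · subst hpt
    simp only [Jset, if_true, mem_Ici] at ha
    refine ⟨ENNReal.ofReal (1 / (-γ + 1)), ENNReal.ofReal_ne_top, fun G Φ hG h => ?_⟩
    simp only [eLpNorm_exponent_top]
    set M := eLpNormEssSup (fun u => u ^ (a + γ) * G u) (volume.restrict (Ioo 0 1)) with hM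
    have hae : ∀ᵐ v ∂(volume.restrict (Ioo (0:ℝ) 1)), ‖v ^ (a + γ) * G v‖ₑ ≤ M :=
      ae_le_eLpNormEssSup
    refine eLpNormEssSup_le_of_ae_enorm_bound ?_
    filter_upwards [ae_restrict_mem measurableSet_Ioo] with u hu
    rw [aux_enorm _ _ _ hu.1]
    have hane : ENNReal.ofReal u ^ a ≠ ⊤ := ENNReal.rpow_ne_top_of_nonneg ha ENNReal.ofReal_ne_top
    have hsub : Ioo u 1 ⊆ Ioo (0:ℝ) 1 := Ioo_subset_Ioo_left hu.1.le
    calc _ ≤ ENNReal.ofReal u ^ a * ∫⁻ v in Ioo u 1, ‖G v‖ₑ := mul_le_mul_right (h u hu) _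
      _ = ∫⁻ v in Ioo u 1, ENNReal.ofReal u ^ a * ‖G v‖ₑ := (lintegral_const_mul' _ _ hane).symm
      _ ≤ ∫⁻ v in Ioo u 1, ENNReal.ofReal v ^ (-γ) * M := by
          refine lintegral_mono_ae ?_
          filter_upwards [ae_restrict_mem measurableSet_Ioo, ae_restrict_of_ae_restrict_of_subset hsub hae]
            with v hv hvM
          have hv0 := hu.1.trans hv.1
          have hV0 : ENNReal.ofReal v ≠ 0 := by simpa using hv0
          rw [aux_enorm _ _ _ hv0] at hvM
          calc _ ≤ ENNReal.ofReal v ^ a * ‖G v‖ₑ :=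
                mul_le_mul_left (ENNReal.rpow_le_rpow (ENNReal.ofReal_le_ofReal hv.1.le) ha) _
            _ = ENNReal.ofReal v ^ (-γ) * (ENNReal.ofReal v ^ (a + γ) * ‖G v‖ₑ) := by
                rw [← mul_assoc, ← ENNReal.rpow_add _ _ hV0 ENNReal.ofReal_ne_top]
                congr 2; ring
            _ ≤ _ := mul_le_mul_right hvM _
      _ ≤ ∫⁻ v in Ioo (0:ℝ) 1, ENNReal.ofReal v ^ (-γ) * M := lintegral_mono_set hsub
      _ = _ := by
          rw [lintegral_mul_const _ (ENNReal.measurable_ofReal.pow_const _),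
            aux_I2 _ (by linarith) 1 one_pos]
          simp
  · have hp0 : p ≠ 0 := (zero_lt_one.trans_le hp).ne'
    have hP : 1 ≤ p.toReal := by
      simpa using (ENNReal.toReal_le_toReal ENNReal.one_ne_top hpt).2 hp
    simp only [Jset, if_neg hpt, mem_Ioi] at ha
    have hP0 : 0 < p.toReal := by linarith
    rw [div_lt_iff₀ hP0] at ha
    obtain ⟨C, hC, H⟩ := aux_hardy p.toReal a γ hP hγ ha
    refine ⟨C ^ (1 / p.toReal), ENNReal.rpow_ne_top_of_nonneg (by positivity) hC,
      fun G Φ hG h => ?_⟩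
    rw [eLpNorm_eq_lintegral_rpow_enorm_toReal hp0 hpt, eLpNorm_eq_lintegral_rpow_enorm_toReal hp0 hpt,
      ← ENNReal.mul_rpow_of_nonneg _ _ (by positivity)]
    refine ENNReal.rpow_le_rpow ?_ (by positivity)
    have hR : ∫⁻ v in Ioo (0:ℝ) 1, ‖v ^ (a + γ) * G v‖ₑ ^ p.toReal =
        ∫⁻ v in Ioo (0:ℝ) 1, (ENNReal.ofReal v ^ (a + γ) * ‖G v‖ₑ) ^ p.toReal := by
      refine setLIntegral_congr_fun measurableSet_Ioo fun v hv => ?_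
      simp only [aux_enorm _ _ _ hv.1]
    rw [hR]
    refine le_trans ?_ (H _ hG.enorm)
    refine setLIntegral_mono' measurableSet_Ioo fun u hu => ?_
    rw [aux_enorm _ _ _ hu.1]
    exact ENNReal.rpow_le_rpow (mul_le_mul_right (h u hu) _) hP0.le

theorem aux_pow (p : ℝ≥0∞) (hp : 1 ≤ p) (a : ℝ) (ha : a ∈ Jset p) :
    eLpNorm (fun u : ℝ => u ^ a * 1) p (volume.restrict (Ioo 0 1)) ≠ ⊤ := by
  by_cases hpt : p = ⊤
  · subst hpt
    simp only [Jset, if_true, mem_Ici] at ha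
    simp only [eLpNorm_exponent_top]
    refine ne_top_of_le_ne_top ENNReal.one_ne_top (eLpNormEssSup_le_of_ae_enorm_bound ?_)
    filter_upwards [ae_restrict_mem measurableSet_Ioo] with u hu
    rw [aux_enorm _ _ _ hu.1]
    simpa using ENNReal.rpow_le_one (by simpa using hu.2.le) ha
  · have hp0 : p ≠ 0 := (zero_lt_one.trans_le hp).ne'
    have hP0 : 0 < p.toReal := ENNReal.toReal_pos hp0 hpt
    simp only [Jset, if_neg hpt, mem_Ioi] at ha
    rw [div_lt_iff₀ hP0] at ha
    rw [eLpNorm_eq_lintegral_rpow_enorm_toReal hp0 hpt]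
    refine ENNReal.rpow_ne_top_of_nonneg (by positivity) ?_
    have hR : ∫⁻ v in Ioo (0:ℝ) 1, ‖v ^ a * 1‖ₑ ^ p.toReal =
        ∫⁻ v in Ioo (0:ℝ) 1, (ENNReal.ofReal v ^ (a * p.toReal)) := by
      refine setLIntegral_congr_fun measurableSet_Ioo fun v hv => ?_
      simp only [aux_enorm _ _ _ hv.1]
      rw [ENNReal.rpow_mul]; simp
    rw [hR, aux_I2 _ ha 1 one_pos]
    simp

theorem aux_jacobi_meas (a b : ℝ) : Measurable (jacobi a b) := by
  unfold jacobi
  exact ((measurable_const.add measurable_id).pow_const _).mul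
    ((measurable_const.sub measurable_id).pow_const _)

theorem aux_mp1 : MeasurePreserving (fun x : ℝ => 1 - x) (volume.restrict (Ioo 0 1))
    (volume.restrict (Ioo 0 1)) := by
  have := (Measure.measurePreserving_sub_left (volume : Measure ℝ) 1).restrict_preimage
    (s := Ioo (0:ℝ) 1) measurableSet_Ioo
  simpa using this

theorem aux_mp2 : MeasurePreserving (fun x : ℝ => -x) (volume.restrict (Ioo (-1) 0))
    (volume.restrict (Ioo 0 1)) := by
  have := (Measure.measurePreserving_neg (volume : Measure ℝ)).restrict_preimage
    (s := Ioo (0:ℝ) 1) measurableSet_Ioo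
  simpa using this

theorem aux_bd (a x : ℝ) (hx : x ∈ Ioo (0:ℝ) 1) :
    (1 + x) ^ a ≤ 2 ^ |a| ∧ 1 ≤ 2 ^ |a| * (1 + x) ^ a := by
  have h0 : 0 < 1 + x := by linarith [hx.1]
  have h1 : 1 ≤ 1 + x := by linarith [hx.1]
  have h2 : (1 + x) ^ |a| ≤ 2 ^ |a| := Real.rpow_le_rpow h0.le (by linarith [hx.2]) (abs_nonneg a)
  refine ⟨(Real.rpow_le_rpow_of_exponent_le h1 (le_abs_self a)).trans h2, ?_⟩
  calc (1:ℝ) = (1 + x) ^ |a| * (1 + x) ^ (-|a|) := by rw [← Real.rpow_add h0]; simp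
    _ ≤ _ := mul_le_mul h2 (Real.rpow_le_rpow_of_exponent_le h1 (neg_abs_le a))
      (Real.rpow_nonneg h0.le _) (by positivity)

/-- upper comparison on the right half -/
theorem aux_up (p : ℝ≥0∞) (a b : ℝ) (Φ : ℝ → ℝ) (hΦ : Measurable Φ) :
    eLpNorm (fun x => jacobi a b x * Φ x) p (volume.restrict (Ioo 0 1)) ≤
      ENNReal.ofReal (2 ^ |a|) *
        eLpNorm (fun u => u ^ b * Φ (1 - u)) p (volume.restrict (Ioo 0 1)) := by
  have hm : Measurable fun u : ℝ => u ^ b * Φ (1 - u) :=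
    (measurable_id.pow_const _).mul (hΦ.comp (measurable_const.sub measurable_id))
  rw [← eLpNorm_comp_measurePreserving hm.aestronglyMeasurable aux_mp1]
  refine eLpNorm_le_mul_eLpNorm_of_ae_le_mul ?_ p
  filter_upwards [ae_restrict_mem measurableSet_Ioo] with x hx
  have h0 : 0 < 1 + x := by linarith [hx.1]
  simp only [Function.comp, jacobi, sub_sub_cancel]
  rw [mul_assoc, norm_mul, Real.norm_of_nonneg (Real.rpow_nonneg h0.le _)]
  exact mul_le_mul_of_nonneg_right (aux_bd a x hx).1 (norm_nonneg _)

theorem aux_low (p : ℝ≥0∞) (a b : ℝ) (G : ℝ → ℝ) (hG : Measurable G) :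
    eLpNorm (fun u => u ^ b * G (1 - u)) p (volume.restrict (Ioo 0 1)) ≤
      ENNReal.ofReal (2 ^ |a|) *
        eLpNorm (fun x => jacobi a b x * G x) p (volume.restrict (Ioo 0 1)) := by
  have hm : Measurable fun u : ℝ => u ^ b * G (1 - u) :=
    (measurable_id.pow_const _).mul (hG.comp (measurable_const.sub measurable_id))
  rw [← eLpNorm_comp_measurePreserving hm.aestronglyMeasurable aux_mp1]
  refine eLpNorm_le_mul_eLpNorm_of_ae_le_mul ?_ p
  filter_upwards [ae_restrict_mem measurableSet_Ioo] with x hx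
  have h0 : 0 < 1 + x := by linarith [hx.1]
  simp only [Function.comp, jacobi, sub_sub_cancel]
  rw [mul_assoc ((1 + x) ^ a), norm_mul ((1 + x) ^ a), Real.norm_of_nonneg (Real.rpow_nonneg h0.le _),
    ← mul_assoc]
  exact le_mul_of_one_le_left (norm_nonneg _) (aux_bd a x hx).2

theorem aux_half (p : ℝ≥0∞) (hp : 1 ≤ p) (α β γ : ℝ) (hγ : γ < 1) (hb : β - γ ∈ Jset p) :
    ∃ C : ℝ≥0∞, C ≠ ⊤ ∧ ∀ G Φ : ℝ → ℝ, Measurable G → Measurable Φ →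
      (∀ x ∈ Ioo (0:ℝ) 1, ‖Φ x‖ₑ ≤ ∫⁻ t in Ioo 0 x, ‖G t‖ₑ) →
      eLpNorm (fun x => jacobi (α - γ) (β - γ) x * Φ x) p (volume.restrict (Ioo 0 1)) ≤
      C * eLpNorm (fun x => jacobi α β x * G x) p (volume.restrict (Ioo 0 1)) := by
  obtain ⟨C, hC, H⟩ := aux_core p hp (β - γ) γ hγ hb
  refine ⟨ENNReal.ofReal (2 ^ |α - γ|) * (C * ENNReal.ofReal (2 ^ |α|)),
    ENNReal.mul_ne_top ENNReal.ofReal_ne_top (ENNReal.mul_ne_top hC ENNReal.ofReal_ne_top),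
    fun G Φ hG hΦ h => (aux_up p _ _ Φ hΦ).trans ?_⟩
  rw [mul_assoc, mul_assoc]
  refine mul_le_mul_right ((H (fun u => G (1 - u)) (fun u => Φ (1 - u))
    (hG.comp (measurable_const.sub measurable_id)) ?_).trans ?_) _
  · intro u hu
    refine (h (1 - u) ⟨by linarith [hu.2], by linarith [hu.1]⟩).trans (le_of_eq ?_)
    have := (Measure.measurePreserving_sub_left (volume : Measure ℝ) 1).setLIntegral_comp_preimage
      (s := Ioo (0:ℝ) (1 - u)) measurableSet_Ioo hG.enorm
    rw [← this]
    simp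
  · rw [sub_add_cancel]
    exact mul_le_mul_right (aux_low p α β G hG) _

theorem aux_const_half (p : ℝ≥0∞) (hp : 1 ≤ p) (a b : ℝ) (hb : b ∈ Jset p) :
    eLpNorm (fun x => jacobi a b x * 1) p (volume.restrict (Ioo 0 1)) ≠ ⊤ :=
  ne_top_of_le_ne_top (ENNReal.mul_ne_top ENNReal.ofReal_ne_top (aux_pow p hp b hb))
    (aux_up p a b (fun _ => 1) measurable_const)

theorem aux_reflect (p : ℝ≥0∞) (a b : ℝ) (Φ : ℝ → ℝ) (hΦ : Measurable Φ) :
    eLpNorm (fun x => jacobi a b x * Φ x) p (volume.restrict (Ioo (-1) 0)) =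
    eLpNorm (fun x => jacobi b a x * Φ (-x)) p (volume.restrict (Ioo 0 1)) := by
  have hm : Measurable (fun x => jacobi b a x * Φ (-x)) :=
    (aux_jacobi_meas _ _).mul (hΦ.comp measurable_neg)
  rw [← eLpNorm_comp_measurePreserving hm.aestronglyMeasurable aux_mp2]
  congr 1
  ext x
  simp only [Function.comp, jacobi, neg_neg, sub_neg_eq_add]
  rw [mul_comm ((1 + -x) ^ b), ← sub_eq_add_neg]

theorem aux_split (p : ℝ≥0∞) (hp : 1 ≤ p) (g : ℝ → ℝ) (hg : Measurable g) :
    LpOn g p (-1) 1 ≤ eLpNorm g p (volume.restrict (Ioo (-1) 0)) +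
      eLpNorm g p (volume.restrict (Ioo 0 1)) := by
  unfold LpOn
  rw [← eLpNorm_indicator_eq_eLpNorm_restrict measurableSet_Icc,
    ← eLpNorm_indicator_eq_eLpNorm_restrict measurableSet_Ioo,
    ← eLpNorm_indicator_eq_eLpNorm_restrict measurableSet_Ioo]
  refine le_trans (le_of_eq (eLpNorm_congr_ae ?_)) (eLpNorm_add_le
    (hg.indicator measurableSet_Ioo).aestronglyMeasurable
    (hg.indicator measurableSet_Ioo).aestronglyMeasurable hp)
  have h : ∀ c : ℝ, ∀ᵐ x : ℝ, x ≠ c := fun c => by simp [ae_iff]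
  filter_upwards [h (-1), h 0, h 1] with x h1 h2 h3
  simp only [indicator, Pi.add_apply, mem_Icc, mem_Ioo]
  rcases lt_or_gt_of_ne h1 with h1 | h1 <;> rcases lt_or_gt_of_ne h2 with h2 | h2 <;>
    rcases lt_or_gt_of_ne h3 with h3 | h3 <;>
    first
      | (exfalso; linarith)
      | simp [h1, h2, h3, h1.le, h3.le, h1.not_ge, h3.not_ge, h2.not_gt, h1.not_gt, h3.not_gt]

theorem aux_sub (p : ℝ≥0∞) (g : ℝ → ℝ) (a b : ℝ) (ha : -1 ≤ a) (hb : b ≤ 1) :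
    eLpNorm g p (volume.restrict (Ioo a b)) ≤ LpOn g p (-1) 1 :=
  eLpNorm_mono_measure _ (Measure.restrict_mono
    (Ioo_subset_Icc_self.trans (Icc_subset_Icc ha hb)) le_rfl)

theorem aux_full (p : ℝ≥0∞) (hp : 1 ≤ p) (α β γ : ℝ) (hγ : γ < 1)
    (hαγ : α - γ ∈ Jset p) (hβγ : β - γ ∈ Jset p) :
    ∃ C : ℝ≥0∞, C ≠ ⊤ ∧ ∀ G Φ : ℝ → ℝ, Measurable G → Measurable Φ →
      (∀ x ∈ Ioo (-1:ℝ) 1, Φ x = ∫ t in (0:ℝ)..x, G t) →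
      LpOn (fun x => jacobi (α - γ) (β - γ) x * Φ x) p (-1) 1 ≤
      C * LpOn (fun x => jacobi α β x * G x) p (-1) 1 := by
  obtain ⟨C1, hC1, H1⟩ := aux_half p hp α β γ hγ hβγ
  obtain ⟨C2, hC2, H2⟩ := aux_half p hp β α γ hγ hαγ
  refine ⟨C2 + C1, ENNReal.add_ne_top.2 ⟨hC2, hC1⟩, fun G Φ hG hΦ h => ?_⟩
  have key : ∀ G : ℝ → ℝ, ∀ x : ℝ, 0 < x →
      ‖∫ t in (0:ℝ)..x, G t‖ₑ ≤ ∫⁻ t in Ioo 0 x, ‖G t‖ₑ := by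
    intro G x hx
    rw [intervalIntegral.integral_of_le hx.le, integral_Ioc_eq_integral_Ioo]
    exact enorm_integral_le_lintegral_enorm _
  refine (aux_split p hp (fun x => jacobi (α - γ) (β - γ) x * Φ x)
    ((aux_jacobi_meas _ _).mul hΦ)).trans ?_
  rw [add_mul]
  refine add_le_add ?_ ?_
  · rw [aux_reflect _ _ _ _ hΦ]
    refine (H2 (fun x => G (-x)) (fun x => Φ (-x)) (hG.comp measurable_neg)
      (hΦ.comp measurable_neg) ?_).trans ?_
    · intro x hx
      rw [h (-x) ⟨by linarith [hx.2], by linarith [hx.1]⟩]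
      refine le_trans (le_of_eq ?_) (key _ x hx.1)
      rw [intervalIntegral.integral_comp_neg, neg_zero, intervalIntegral.integral_symm, enorm_neg]
    · rw [← aux_reflect _ _ _ _ hG]
      exact mul_le_mul_right (aux_sub p _ _ _ le_rfl zero_le_one) _
  · refine (H1 G Φ hG hΦ ?_).trans (mul_le_mul_right (aux_sub p _ _ _ (by norm_num) le_rfl) _)
    intro x hx
    rw [h x ⟨by linarith [hx.1], hx.2⟩]
    exact key _ x hx.1

theorem aux_const (p : ℝ≥0∞) (hp : 1 ≤ p) (a b : ℝ) (ha : a ∈ Jset p) (hb : b ∈ Jset p) :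
    LpOn (fun x => jacobi a b x * 1) p (-1) 1 ≠ ⊤ := by
  refine ne_top_of_le_ne_top ?_ (aux_split p hp (fun x => jacobi a b x * 1)
    ((aux_jacobi_meas _ _).mul measurable_const))
  rw [aux_reflect p a b (fun _ => 1) measurable_const]
  exact ENNReal.add_ne_top.2 ⟨aux_const_half p hp b a ha, aux_const_half p hp a b hb⟩

theorem aux_iter_meas (n : ℕ) (f : ℝ → ℝ) (hf : Measurable f) : Measurable (iteratedDeriv n f) := by
  cases n with
  | zero => simpa using hf
  | succ n => rw [iteratedDeriv_succ]; exact measurable_deriv _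

theorem statement19 (p : ℝ≥0∞) (hp : 1 ≤ p) (r : ℕ) (α β γ : ℝ) (hγ : γ < 1)
    (hαγ : α - γ ∈ Jset p) (hβγ : β - γ ∈ Jset p) :
    (∀ f : ℝ → ℝ, MemWpr p (r + 1) α β f → MemWpr p r (α - γ) (β - γ) f) ∧
    ∃ c > (0 : ℝ), ∀ f : ℝ → ℝ, MemWpr p (r + 1) α β f → iteratedDeriv r f 0 = 0 →
      LpOn (fun x => jacobi (α - γ) (β - γ) x * iteratedDeriv r f x) p (-1) 1 ≤
        ENNReal.ofReal c *
          LpOn (fun x => jacobi α β x * iteratedDeriv (r + 1) f x) p (-1) 1 := by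
  obtain ⟨C, hC, H⟩ := aux_full p hp α β γ hγ hαγ hβγ
  have main : ∀ f : ℝ → ℝ, MemWpr p (r + 1) α β f →
      LpOn (fun x => jacobi (α - γ) (β - γ) x * (iteratedDeriv r f x - iteratedDeriv r f 0))
        p (-1) 1 ≤ C * LpOn (fun x => jacobi α β x * iteratedDeriv (r + 1) f x) p (-1) 1 := by
    rintro f ⟨hf, _, h2, _⟩
    refine H _ _ (aux_iter_meas _ f hf) ((aux_iter_meas _ f hf).sub measurable_const) ?_
    intro x hx
    rw [h2 r (Nat.lt_succ_self r) x hx]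
    ring
  constructor
  · intro f hf
    have hm := main f hf
    obtain ⟨hf0, h1, h2, h3⟩ := hf
    refine ⟨hf0, fun j hj => h1 j (by omega), fun j hj => h2 j (by omega), ?_⟩
    set y := iteratedDeriv r f 0
    have e : (fun x => jacobi (α - γ) (β - γ) x * iteratedDeriv r f x) =
        (fun x => jacobi (α - γ) (β - γ) x * (iteratedDeriv r f x - y)) +
        y • (fun x => jacobi (α - γ) (β - γ) x * 1) := by
      ext x
      simp only [Pi.add_apply, Pi.smul_apply, smul_eq_mul]
      ring
    rw [e]
    have hj := aux_jacobi_meas (α - γ) (β - γ)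
    refine ne_top_of_le_ne_top ?_ (eLpNorm_add_le
      (hj.mul ((aux_iter_meas r f hf0).sub measurable_const)).aestronglyMeasurable
      ((hj.mul measurable_const).const_smul y).aestronglyMeasurable hp)
    rw [eLpNorm_const_smul]
    exact ENNReal.add_ne_top.2 ⟨ne_top_of_le_ne_top (ENNReal.mul_ne_top hC h3) hm,
      ENNReal.mul_ne_top enorm_ne_top (aux_const p hp _ _ hαγ hβγ)⟩
  · refine ⟨C.toReal + 1, by positivity, fun f hf h0 => ?_⟩
    have hm := main f hf
    simp only [h0, sub_zero] at hm
    refine hm.trans (mul_le_mul_left ?_ _)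
    rw [← ENNReal.ofReal_toReal hC]
    exact ENNReal.ofReal_le_ofReal (by simp)
end
end
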